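/- Let E be a smooth manifold with a smooth action of a compact connected Lie group G, let N be a closed normal subgroup of G acting freely on E, and set Q = G/N. Then the Weil-model G-equivariant cohomology of E is isomorphic to the Weil-model Q-equivariant cohomology of the quotient: WH^*_G(E) ≅ WH^*_Q(E/N). -/

import Mathlib

/-!
Common algebraic framework (following H. Cartan, and Guillemin–Sternberg):
*operations* of a Lie algebra on a ℤ-graded supercommutative algebra.

For a **compact connected** Lie group `G`, a smooth `G`-action on a graded algebra is
determined infinitesimally, invariance under `G` coincides with infinitesimal invariance
(kernel of the Lie derivative), and `G`-equivariance of maps coincides with infinitesimal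
equivariance.  Accordingly the smooth `G`-action is encoded by its infinitesimal Lie
derivative `L` below; topological (Fréchet) requirements, which play no role in the
statements, are omitted.
-/

open scoped TensorProduct

set_option synthInstance.maxHeartbeats 1000000
set_option maxHeartbeats 1600000

noncomputable section

/-- The sign `(-1)^n` for an integer `n`. -/
def sgn (n : ℤ) : ℤ := if Even n then 1 else -1

/-- An *operation* of a real Lie algebra `𝔤` on a `ℤ`-graded supercommutative real
algebra `A`: a degree `+1` odd derivation `d` with `d² = 0`, an (infinitesimal) action
`L` of `𝔤` by even degree-`0` derivations commuting with `d`, and an equivariant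
contraction `I` by odd degree-`(-1)` derivations satisfying anticommutation,
`[L_X, I_Y] = I_[X,Y]` and Cartan's formula `I_X d + d I_X = L_X`. -/
structure Operation (𝔤 : Type) [LieRing 𝔤] [LieAlgebra ℝ 𝔤]
    (A : Type) [Ring A] [Algebra ℝ A] : Type where
  grading : ℤ → Submodule ℝ A
  decomposition : DirectSum.Decomposition grading
  one_mem : (1 : A) ∈ grading 0
  mul_mem : ∀ {m n : ℤ} {a b : A}, a ∈ grading m → b ∈ grading n → a * b ∈ grading (m + n)
  supercomm : ∀ {m n : ℤ} {a b : A}, a ∈ grading m → b ∈ grading n →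
      a * b = sgn (m * n) • (b * a)
  d : Module.End ℝ A
  d_mem : ∀ {n : ℤ} {a : A}, a ∈ grading n → d a ∈ grading (n + 1)
  d_mul : ∀ {n : ℤ} {a : A}, a ∈ grading n → ∀ b : A,
      d (a * b) = d a * b + sgn n • (a * d b)
  d_sq : d ∘ₗ d = 0
  L : 𝔤 →ₗ[ℝ] Module.End ℝ A
  L_mem : ∀ (X : 𝔤) {n : ℤ} {a : A}, a ∈ grading n → L X a ∈ grading n
  L_mul : ∀ (X : 𝔤) (a b : A), L X (a * b) = L X a * b + a * L X b
  L_bracket : ∀ X Y : 𝔤, L ⁅X, Y⁆ = L X ∘ₗ L Y - L Y ∘ₗ L X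
  L_d : ∀ X : 𝔤, L X ∘ₗ d = d ∘ₗ L X
  I : 𝔤 →ₗ[ℝ] Module.End ℝ A
  I_mem : ∀ (X : 𝔤) {n : ℤ} {a : A}, a ∈ grading n → I X a ∈ grading (n - 1)
  I_mul : ∀ (X : 𝔤) {n : ℤ} {a : A}, a ∈ grading n → ∀ b : A,
      I X (a * b) = I X a * b + sgn n • (a * I X b)
  I_I : ∀ X Y : 𝔤, I X ∘ₗ I Y + I Y ∘ₗ I X = 0
  L_I : ∀ X Y : 𝔤, L X ∘ₗ I Y - I Y ∘ₗ L X = I ⁅X, Y⁆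
  cartan : ∀ X : 𝔤, I X ∘ₗ d + d ∘ₗ I X = L X

namespace Operation

variable {𝔤 : Type} [LieRing 𝔤] [LieAlgebra ℝ 𝔤] {A : Type} [Ring A] [Algebra ℝ A]

/-- Invariant elements (`= G`-invariant elements, for `G` compact connected). -/
def inv (op : Operation 𝔤 A) : Submodule ℝ A := ⨅ X : 𝔤, LinearMap.ker (op.L X)

/-- Horizontal elements. -/
def hor (op : Operation 𝔤 A) : Submodule ℝ A := ⨅ X : 𝔤, LinearMap.ker (op.I X)

/-- Basic elements. -/
def bas (op : Operation 𝔤 A) : Submodule ℝ A := op.inv ⊓ op.hor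

end Operation

/-- `n`-cocycles of the complex obtained by restricting `d` to the graded pieces `P n`. -/
def cocycles {A : Type} [AddCommGroup A] [Module ℝ A] (d : Module.End ℝ A)
    (P : ℤ → Submodule ℝ A) (n : ℤ) : Submodule ℝ A :=
  P n ⊓ LinearMap.ker d

/-- Degree-`n` cohomology of the subcomplex `P` (with differential `d`):
cocycles in `P n` modulo `d (P (n-1))`. -/
abbrev gradedCoh {A : Type} [AddCommGroup A] [Module ℝ A] (d : Module.End ℝ A)
    (P : ℤ → Submodule ℝ A) (n : ℤ) :=
  ↥(cocycles d P n) ⧸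
    Submodule.comap (cocycles d P n).subtype (Submodule.map d (P (n - 1)))

/-- Structure constants `C^i_{jk}` of `𝔤`: `⁅e_j, e_k⁆ = C^i_{jk} e_i`. -/
def structConst {ι 𝔤 : Type} [Fintype ι] [LieRing 𝔤] [LieAlgebra ℝ 𝔤]
    (b : Module.Basis ι ℝ 𝔤) (i j k : ι) : ℝ :=
  b.repr ⁅b j, b k⁆ i

/-- The Weil algebra `W_𝔤 = S𝔤* ⊗ Λ𝔤*` of `𝔤`, presented axiomatically: an operation `W`
together with generators `θ^i` (degree 1) and `Ω^i` (degree 2) on which `d_W`, `L`, `I`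
take the classical values, and such that the monomials `Ω^m · θ^S` form a basis
(this pins `W` down as `S𝔤* ⊗ Λ𝔤*`). -/
structure WeilData (ι : Type) [Fintype ι] [DecidableEq ι] [LinearOrder ι]
    {𝔤 : Type} [LieRing 𝔤] [LieAlgebra ℝ 𝔤] (b : Module.Basis ι ℝ 𝔤)
    (W : Type) [Ring W] [Algebra ℝ W] extends Operation 𝔤 W where
  θ : ι → W
  Ω : ι → W
  θ_mem : ∀ i, θ i ∈ grading 1
  Ω_mem : ∀ i, Ω i ∈ grading 2
  d_θ : ∀ i, d (θ i) =
      (-(1/2 : ℝ)) • ∑ j, ∑ k, structConst b i j k • (θ j * θ k) + Ω i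
  d_Ω : ∀ i, d (Ω i) = -∑ j, ∑ k, structConst b i j k • (θ j * Ω k)
  L_θ : ∀ i j, L (b i) (θ j) = -∑ k, structConst b j i k • θ k
  L_Ω : ∀ i j, L (b i) (Ω j) = -∑ k, structConst b j i k • Ω k
  I_θ : ∀ i j, I (b i) (θ j) = if i = j then 1 else 0
  I_Ω : ∀ i j, I (b i) (Ω j) = 0
  free : ∃ w : Module.Basis ((ι →₀ ℕ) × Finset ι) ℝ W, ∀ p : (ι →₀ ℕ) × Finset ι,
      w p = ((Finset.univ.sort (· ≤ ·)).map fun i => Ω i ^ p.1 i).prod *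
        ((p.2.sort (· ≤ ·)).map θ).prod

/-- An algebraic connection on an operation, in the coordinates given by the basis `b`:
elements `θ̃^i` of degree 1 with `I_j θ̃^k = δ^k_j` and `L_k θ̃^i = -C^i_{kj} θ̃^j`
(the latter is `G`-equivariance, infinitesimally). -/
structure Connection {ι : Type} [Fintype ι] [DecidableEq ι]
    {𝔤 : Type} [LieRing 𝔤] [LieAlgebra ℝ 𝔤] (b : Module.Basis ι ℝ 𝔤)
    {A : Type} [Ring A] [Algebra ℝ A] (op : Operation 𝔤 A) where
  θ : ι → A
  θ_mem : ∀ i, θ i ∈ op.grading 1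
  I_θ : ∀ i j, op.I (b i) (θ j) = if i = j then 1 else 0
  L_θ : ∀ i j, op.L (b i) (θ j) = -∑ k, structConst b j i k • θ k

/-- The curvature `ω̃^i = dθ̃^i - ½ C^i_{jk} θ̃^j θ̃^k` of a connection. -/
def Connection.curv {ι : Type} [Fintype ι] [DecidableEq ι]
    {𝔤 : Type} [LieRing 𝔤] [LieAlgebra ℝ 𝔤] {b : Module.Basis ι ℝ 𝔤}
    {A : Type} [Ring A] [Algebra ℝ A] {op : Operation 𝔤 A}
    (c : Connection b op) (i : ι) : A :=
  op.d (c.θ i) - (1/2 : ℝ) • ∑ j, ∑ k, structConst b i j k • (c.θ j * c.θ k)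

end

noncomputable section
open scoped TensorProduct

variable {ι : Type} [Fintype ι] [DecidableEq ι] [LinearOrder ι]
variable {𝔤 : Type} [LieRing 𝔤] [LieAlgebra ℝ 𝔤]
variable {A : Type} [Ring A] [Algebra ℝ A]
variable {W : Type} [Ring W] [Algebra ℝ W]

/-- Truncated exponential `exp(f) = Σ_{n<N} fⁿ/n!` of an endomorphism (all our
exponents are of nilpotent operators, so a suitable finite truncation is exact). -/
def expEnd {M : Type} [AddCommGroup M] [Module ℝ M] (N : ℕ) (f : Module.End ℝ M) :
    Module.End ℝ M :=
  ∑ n ∈ Finset.range N, ((n.factorial : ℝ)⁻¹) • f ^ n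

/-- The operator `𝔸^j_i = θ^j ⊗ I_i` on `B = W_𝔤 ⊗ A`: left multiplication by `θ^j`
composed with the contraction `I_i` of `A` (extended to the tensor product with the
usual Koszul sign operator `ε` of `W`). -/
def AOp (b : Module.Basis ι ℝ 𝔤) (wd : WeilData ι b W) (op : Operation 𝔤 A)
    (ε : Module.End ℝ W) (j i : ι) : Module.End ℝ (W ⊗[ℝ] A) :=
  TensorProduct.map (LinearMap.mulLeft ℝ (wd.θ j) ∘ₗ ε) (op.I (b i))

/-- `𝔸_T = t^i_j 𝔸^j_i` for `T = t^i_j θ^j ⊗ e_i ∈ 𝔤* ⊗ 𝔤`. -/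
def AOpT (b : Module.Basis ι ℝ 𝔤) (wd : WeilData ι b W) (op : Operation 𝔤 A)
    (ε : Module.End ℝ W) (T : ι → ι → ℝ) : Module.End ℝ (W ⊗[ℝ] A) :=
  ∑ i, ∑ j, T i j • AOp b wd op ε j i

/-- The operator `𝕃^j_i = θ^j ⊗ L_i - Ω^j ⊗ I_i` on `B = W_𝔤 ⊗ A`. -/
def LOp (b : Module.Basis ι ℝ 𝔤) (wd : WeilData ι b W) (op : Operation 𝔤 A)
    (ε : Module.End ℝ W) (j i : ι) : Module.End ℝ (W ⊗[ℝ] A) :=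
  TensorProduct.map (LinearMap.mulLeft ℝ (wd.θ j)) (op.L (b i)) -
    TensorProduct.map (LinearMap.mulLeft ℝ (wd.Ω j) ∘ₗ ε) (op.I (b i))

/-- `𝕃_T = t^i_j 𝕃^j_i` for `T = t^i_j θ^j ⊗ e_i ∈ 𝔤* ⊗ 𝔤`. -/
def LOpT (b : Module.Basis ι ℝ 𝔤) (wd : WeilData ι b W) (op : Operation 𝔤 A)
    (ε : Module.End ℝ W) (T : ι → ι → ℝ) : Module.End ℝ (W ⊗[ℝ] A) :=
  ∑ i, ∑ j, T i j • LOp b wd op ε j i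

/-- The differential `D = d_W ⊗ 1 + ε ⊗ d` of the tensor product operation
`B = W_𝔤 ⊗ A` (`ε` the grading/sign operator of `W`). -/
def DTot {b : Module.Basis ι ℝ 𝔤} (wd : WeilData ι b W) (op : Operation 𝔤 A)
    (ε : Module.End ℝ W) : Module.End ℝ (W ⊗[ℝ] A) :=
  LinearMap.rTensor A wd.d + TensorProduct.map ε op.d

/-- The total Lie derivative `L_X = L_X ⊗ 1 + 1 ⊗ L_X` of `B = W_𝔤 ⊗ A`. -/
def LTot {b : Module.Basis ι ℝ 𝔤} (wd : WeilData ι b W) (op : Operation 𝔤 A)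
    (X : 𝔤) : Module.End ℝ (W ⊗[ℝ] A) :=
  LinearMap.rTensor A (wd.L X) + LinearMap.lTensor W (op.L X)

/-- The total contraction `I_X = ι_X ⊗ 1 + ε ⊗ I_X` of `B = W_𝔤 ⊗ A`. -/
def ITot {b : Module.Basis ι ℝ 𝔤} (wd : WeilData ι b W) (op : Operation 𝔤 A)
    (ε : Module.End ℝ W) (X : 𝔤) : Module.End ℝ (W ⊗[ℝ] A) :=
  LinearMap.rTensor A (wd.I X) + TensorProduct.map ε (op.I X)

/-- The degree-`n` part of `W ⊗ A`. -/
def grTensor (b : Module.Basis ι ℝ 𝔤) (wd : WeilData ι b W) (op : Operation 𝔤 A) (n : ℤ) :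
    Submodule ℝ (W ⊗[ℝ] A) :=
  ⨆ p : ℤ, LinearMap.range
    (TensorProduct.map ((wd.grading p).subtype) ((op.grading (n - p)).subtype))



/-- For an ideal `𝔫 ⊆ 𝔤` (a submodule closed under bracketing by `𝔤`), the adjoint
action `ad_Y = ⁅Y, ·⁆` of `Y ∈ 𝔤` restricts to `𝔫`. -/
def adRes (𝔫 : Submodule ℝ 𝔤) (hn : ∀ (Y : 𝔤), ∀ x ∈ 𝔫, ⁅Y, x⁆ ∈ 𝔫) (Y : 𝔤) :
    ↥𝔫 →ₗ[ℝ] ↥𝔫 where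
  toFun X := ⟨⁅Y, (X : 𝔤)⁆, hn Y X X.2⟩
  map_add' X₁ X₂ := by ext; simp
  map_smul' t X := by ext; simp

/-- The moment map `μ(X) = -I_X θ̃ ∈ A⁰ ⊗ 𝔫` of a `G`-equivariant `N`-connection `θ̃`,
viewed (by pairing with `α ∈ 𝔫*`) as a linear map `𝔫* → A⁰` for each `X ∈ 𝔤`. -/
def moment {𝔫 : Submodule ℝ 𝔤} (op : Operation 𝔤 A)
    (θN : Module.Dual ℝ ↥𝔫 →ₗ[ℝ] A) (X : 𝔤) (α : Module.Dual ℝ ↥𝔫) : A :=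
  -op.I X (θN α)

/-! ### Statement 19 -/

variable {κ : Type} [Fintype κ] [DecidableEq κ] [LinearOrder κ]
variable {𝔮 : Type} [LieRing 𝔮] [LieAlgebra ℝ 𝔮]
variable {B : Type} [Ring B] [Algebra ℝ B]
variable {WQ : Type} [Ring WQ] [Algebra ℝ WQ]

open scoped TensorProduct
noncomputable section

/-! ### Auxiliary: super-operations -/

/-- A superalgebra version of an operation, with parity operator and degree operator. -/
structure SuperOp (𝔤 : Type) [LieRing 𝔤] [LieAlgebra ℝ 𝔤]
    (C : Type) [Ring C] [Algebra ℝ C] where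
  ε : Module.End ℝ C
  ε_one : ε 1 = 1
  ε_mul : ∀ a b, ε (a * b) = ε a * ε b
  ε_ε : ∀ a, ε (ε a) = a
  scomm : ∀ a b, a * b = (1/2 : ℝ) • (b * a + b * ε a + ε b * a - ε b * ε a)
  D : Module.End ℝ C
  D_mul : ∀ a b, D (a * b) = D a * b + ε a * D b
  D_ε : ∀ a, D (ε a) = - ε (D a)
  D_D : ∀ a, D (D a) = 0
  deg : Module.End ℝ C
  deg_mul : ∀ a b, deg (a * b) = deg a * b + a * deg b
  deg_ε : ∀ a, deg (ε a) = ε (deg a)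
  deg_D : ∀ a, deg (D a) = D (deg a) + D a
  I : 𝔤 →ₗ[ℝ] Module.End ℝ C
  I_mul : ∀ X a b, I X (a * b) = I X a * b + ε a * I X b
  I_ε : ∀ X a, I X (ε a) = - ε (I X a)
  I_I : ∀ X Y a, I X (I Y a) = - I Y (I X a)
  deg_I : ∀ X a, deg (I X a) = I X (deg a) - I X a
  L : 𝔤 →ₗ[ℝ] Module.End ℝ C
  cartan : ∀ X a, I X (D a) + D (I X a) = L X a
  L_I : ∀ X Y a, L X (I Y a) = I Y (L X a) + I ⁅X, Y⁆ a

lemma eq_zero_of_self_neg {C : Type} [AddCommGroup C] [Module ℝ C] {x : C} (h : x = -x) :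
    x = 0 := by
  have h2 : (2 : ℝ) • x = 0 := by
    rw [two_smul]; nth_rewrite 2 [h]; simp
  simpa using h2

namespace SuperOp

variable {𝔤 : Type} [LieRing 𝔤] [LieAlgebra ℝ 𝔤] {C : Type} [Ring C] [Algebra ℝ C]
  (s : SuperOp 𝔤 C)

lemma comm_odd {a : C} (ha : s.ε a = -a) (b : C) : a * b = s.ε b * a := by
  rw [s.scomm a b, ha]
  simp only [mul_neg]
  module

lemma comm_even {a : C} (ha : s.ε a = a) (b : C) : a * b = b * a := by
  rw [s.scomm a b, ha]
  module

lemma I_one (X : 𝔤) : s.I X 1 = 0 := by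
  have := s.I_mul X 1 1
  simpa [s.ε_one] using this

lemma D_one : s.D 1 = 0 := by
  have := s.D_mul 1 1
  simpa [s.ε_one] using this

lemma L_mul (X : 𝔤) (a b : C) : s.L X (a * b) = s.L X a * b + a * s.L X b := by
  simp only [← s.cartan, s.D_mul, s.I_mul, map_add, s.I_ε, s.D_ε, s.ε_ε]
  noncomm_ring

lemma L_ε (X : 𝔤) (a : C) : s.L X (s.ε a) = s.ε (s.L X a) := by
  simp only [← s.cartan, map_add, s.I_ε, s.D_ε, map_neg, neg_neg]

lemma deg_L (X : 𝔤) (a : C) : s.deg (s.L X a) = s.L X (s.deg a) := by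
  simp only [← s.cartan, map_add, s.deg_I, s.deg_D, map_sub]
  abel

lemma L_D (X : 𝔤) (a : C) : s.L X (s.D a) = s.D (s.L X a) := by
  simp only [← s.cartan, map_add, s.D_D, map_zero, zero_add, add_zero]

end SuperOp

section hp

variable {𝔤 : Type} [LieRing 𝔤] [LieAlgebra ℝ 𝔤] {C : Type} [Ring C] [Algebra ℝ C]
  (s : SuperOp 𝔤 C) (θ : Module.Dual ℝ 𝔤 →ₗ[ℝ] C) {ν : Type}
  (X : ν → 𝔤) (β : ν → Module.Dual ℝ 𝔤)

/-- Iterated horizontal projection. -/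
def hp : List ν → Module.End ℝ C
  | [] => LinearMap.id
  | k :: l => (LinearMap.id - LinearMap.mulLeft ℝ (θ (β k)) ∘ₗ s.I (X k)) ∘ₗ hp l

lemma hp_nil (c : C) : hp s θ X β [] c = c := rfl

lemma hp_cons (k : ν) (l : List ν) (c : C) : hp s θ X β (k :: l) c =
    hp s θ X β l c - θ (β k) * s.I (X k) (hp s θ X β l c) := rfl

lemma I_theta_mul
    (hθε : ∀ γ, s.ε (θ γ) = - θ γ)
    (hθI : ∀ Y γ, s.I Y (θ γ) = γ Y • (1 : C))
    (Y : 𝔤) (γ : Module.Dual ℝ 𝔤) (c : C) :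
    s.I Y (θ γ * c) = γ Y • c - θ γ * s.I Y c := by
  rw [s.I_mul, hθI, hθε, smul_mul_assoc, one_mul, neg_mul, sub_eq_add_neg]

lemma theta_anti
    (hθε : ∀ γ, s.ε (θ γ) = - θ γ)
    (γ γ' : Module.Dual ℝ 𝔤) (c : C) :
    θ γ * (θ γ' * c) = - (θ γ' * (θ γ * c)) := by
  rw [← mul_assoc, s.comm_odd (hθε γ), hθε]
  simp [mul_assoc]

lemma I_hp_comm
    (hθε : ∀ γ, s.ε (θ γ) = - θ γ)
    (hθI : ∀ Y γ, s.I Y (θ γ) = γ Y • (1 : C))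
    (Y : 𝔤) (hY : ∀ k, β k Y = 0) (l : List ν) (c : C) :
    s.I Y (hp s θ X β l c) = hp s θ X β l (s.I Y c) := by
  induction l with
  | nil => rfl
  | cons k l ih =>
    rw [hp_cons, hp_cons, map_sub, I_theta_mul s θ hθε hθI, hY, s.I_I, ih]
    simp

lemma I_hp_zero
    (hθε : ∀ γ, s.ε (θ γ) = - θ γ)
    (hθI : ∀ Y γ, s.I Y (θ γ) = γ Y • (1 : C))
    (hd : ∀ i j, i ≠ j → β i (X j) = 0)
    (hd1 : ∀ i, β i (X i) = 1)
    (j : ν) (l : List ν) (hj : j ∈ l) (c : C) :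
    s.I (X j) (hp s θ X β l c) = 0 := by
  induction l with
  | nil => simp at hj
  | cons k l ih =>
    rw [hp_cons, map_sub, I_theta_mul s θ hθε hθI]
    have h2 : s.I (X j) (s.I (X j) (hp s θ X β l c)) = 0 := by
      have := s.I_I (X j) (X j) (hp s θ X β l c)
      exact eq_zero_of_self_neg this
    by_cases hk : k = j
    · subst hk
      rw [h2, hd1]; simp
    · have : j ∈ l := by
        rcases List.mem_cons.mp hj with h | h
        · exact absurd h.symm hk
        · exact h
      rw [hd k j hk, s.I_I, ih this]
      simp

lemma hp_theta_comm
    (hθε : ∀ γ, s.ε (θ γ) = - θ γ)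
    (hθI : ∀ Y γ, s.I Y (θ γ) = γ Y • (1 : C))
    (hd : ∀ i j, i ≠ j → β i (X j) = 0)
    (j : ν) (l : List ν) (hj : j ∉ l) (c : C) :
    hp s θ X β l (θ (β j) * c) = θ (β j) * hp s θ X β l c := by
  induction l with
  | nil => rfl
  | cons k l ih =>
    have h1 : j ≠ k := fun h => hj (by simp [h])
    have h2 : j ∉ l := fun h => hj (by simp [h])
    rw [hp_cons, hp_cons, ih h2, I_theta_mul s θ hθε hθI, hd j k h1, zero_smul, zero_sub,
      mul_neg, theta_anti s θ hθε, neg_neg, mul_sub]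

lemma hp_theta_zero
    (hθε : ∀ γ, s.ε (θ γ) = - θ γ)
    (hθI : ∀ Y γ, s.I Y (θ γ) = γ Y • (1 : C))
    (hd : ∀ i j, i ≠ j → β i (X j) = 0)
    (hd1 : ∀ i, β i (X i) = 1)
    (j : ν) (l : List ν) (hj : j ∈ l) (c : C) :
    hp s θ X β l (θ (β j) * c) = 0 := by
  induction l with
  | nil => simp at hj
  | cons k l ih =>
    by_cases hjl : j ∈ l
    · rw [hp_cons, ih hjl]; simp
    · have : j = k := by
        rcases List.mem_cons.mp hj with h | h
        · exact h
        · exact absurd h hjl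
      subst this
      rw [hp_cons, hp_theta_comm s θ X β hθε hθI hd j l hjl, I_theta_mul s θ hθε hθI, hd1,
        one_smul, mul_sub, ← mul_assoc (θ (β j)) (θ (β j))]
      have : θ (β j) * θ (β j) = 0 := by
        have := theta_anti s θ hθε (β j) (β j) 1
        simpa using eq_zero_of_self_neg this
      rw [this]; simp

lemma hp_fixed (l : List ν) (c : C) (hc : ∀ Y, s.I Y c = 0) : hp s θ X β l c = c := by
  induction l with
  | nil => rfl
  | cons k l ih => rw [hp_cons, ih, hc]; simp

lemma hp_sub_mem (l : List ν) (c : C) :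
    hp s θ X β l c - c ∈ Submodule.span ℝ {x | ∃ γ c', x = θ γ * c'} := by
  induction l with
  | nil => simp [hp_nil]
  | cons k l ih =>
    rw [hp_cons, sub_right_comm]
    exact Submodule.sub_mem _ ih (Submodule.subset_span ⟨_, _, rfl⟩)

end hp

/-- A horizontal element in the ideal generated by the connection forms is zero. -/
lemma hor_ideal_zero {𝔤 : Type} [LieRing 𝔤] [LieAlgebra ℝ 𝔤] {C : Type} [Ring C] [Algebra ℝ C]
    (s : SuperOp 𝔤 C) (θ : Module.Dual ℝ 𝔤 →ₗ[ℝ] C) {ν : Type} [Fintype ν]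
    (b : Module.Basis ν ℝ 𝔤)
    (hθε : ∀ γ, s.ε (θ γ) = - θ γ) (hθI : ∀ Y γ, s.I Y (θ γ) = γ Y • (1 : C))
    (u : C) (hu : ∀ Y, s.I Y u = 0)
    (hJ : u ∈ Submodule.span ℝ {x | ∃ γ c', x = θ γ * c'}) : u = 0 := by
  classical
  rw [← hp_fixed s θ b b.coord Finset.univ.toList u hu]
  have hd : ∀ i j, i ≠ j → b.coord i (b j) = 0 := by
    intro i j h
    simp [h.symm]
  have hd1 : ∀ i, b.coord i (b i) = 1 := by
    intro i; simp
  have hexp : ∀ γ : Module.Dual ℝ 𝔤, γ = ∑ i, γ (b i) • b.coord i := by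
    intro γ
    apply b.ext
    intro j
    simp
  clear hu
  induction hJ using Submodule.span_induction with
  | mem x hx =>
    obtain ⟨γ, c, rfl⟩ := hx
    rw [hexp γ, map_sum, Finset.sum_mul, map_sum]
    refine Finset.sum_eq_zero fun i _ => ?_
    rw [map_smul, smul_mul_assoc, map_smul,
      hp_theta_zero s θ b b.coord hθε hθI hd hd1 i _ (by simp), smul_zero]
  | zero => simp
  | add x y _ _ h1 h2 => rw [map_add, h1, h2, add_zero]
  | smul a x _ h => rw [map_smul, h, smul_zero]
end

open scoped TensorProduct
noncomputable section

/-- The abstract data needed for the homotopy. -/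
structure Core {𝔤 𝔮 C : Type} [LieRing 𝔤] [LieAlgebra ℝ 𝔤] [LieRing 𝔮] [LieAlgebra ℝ 𝔮]
    [Ring C] [Algebra ℝ C] (s : SuperOp 𝔤 C)
    (𝔫 : Submodule ℝ 𝔤) (hn : ∀ (Y : 𝔤), ∀ x ∈ 𝔫, ⁅Y, x⁆ ∈ 𝔫) (π : 𝔤 →ₗ[ℝ] 𝔮) where
  θ : Module.Dual ℝ 𝔤 →ₗ[ℝ] C
  Ω : Module.Dual ℝ 𝔤 →ₗ[ℝ] C
  θ_ε : ∀ γ, s.ε (θ γ) = - θ γ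
  deg_θ : ∀ γ, s.deg (θ γ) = θ γ
  I_θ : ∀ Y γ, s.I Y (θ γ) = γ Y • (1 : C)
  L_θ : ∀ Y γ, s.L Y (θ γ) = - θ (γ ∘ₗ (LieAlgebra.ad ℝ 𝔤 Y : 𝔤 →ₗ[ℝ] 𝔤))
  D_θ : ∀ γ, s.D (θ γ) - Ω γ ∈ Submodule.span ℝ {x | ∃ γ γ', x = θ γ * θ γ'}
  pd : 𝔤 →ₗ[ℝ] Module.End ℝ C
  pd_mul : ∀ X a b, pd X (a * b) = pd X a * b + a * pd X b
  pd_ε : ∀ X a, pd X (s.ε a) = s.ε (pd X a)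
  pd_θ : ∀ X γ, pd X (θ γ) = 0
  pd_Ω : ∀ X γ, pd X (Ω γ) = γ X • (1 : C)
  deg_pd : ∀ X a, s.deg (pd X a) = pd X (s.deg a) - (2 : ℝ) • pd X a
  I_pd : ∀ Y X a, s.I Y (pd X a) = pd X (s.I Y a)
  L_pd : ∀ Y X a, s.L Y (pd X a) = pd X (s.L Y a) + pd ⁅Y, X⁆ a
  τ : Module.Dual ℝ ↥𝔫 →ₗ[ℝ] C
  τ_ε : ∀ α, s.ε (τ α) = - τ α
  deg_τ : ∀ α, s.deg (τ α) = τ α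
  I_τ : ∀ (X : ↥𝔫) α, s.I (X : 𝔤) (τ α) = α X • (1 : C)
  L_τ : ∀ Y α, s.L Y (τ α) = - τ (α ∘ₗ adRes 𝔫 hn Y)
  F : Submodule ℝ C
  F_one : 1 ∈ F
  F_mul : ∀ a b, a ∈ F → b ∈ F → a * b ∈ F
  F_D : ∀ a, a ∈ F → s.D a ∈ F
  F_I : ∀ Y a, a ∈ F → s.I Y a ∈ F
  F_ε : ∀ a, a ∈ F → s.ε a ∈ F
  F_pd : ∀ (X : ↥𝔫) a, a ∈ F → pd (X : 𝔤) a = 0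
  F_θ : ∀ β : Module.Dual ℝ 𝔮, θ (β ∘ₗ π) ∈ F
  F_Ω : ∀ β : Module.Dual ℝ 𝔮, Ω (β ∘ₗ π) ∈ F
  F_τ : ∀ α, τ α ∈ F
  gen : ∀ R : Submodule ℝ C, F ≤ R → (∀ γ, θ γ ∈ R) → (∀ γ, Ω γ ∈ R) →
    (∀ a b, a ∈ R → b ∈ R → a * b ∈ R) → R = ⊤

set_option linter.unusedSectionVars false

namespace Core

variable {𝔤 𝔮 C : Type} [LieRing 𝔤] [LieAlgebra ℝ 𝔤] [LieRing 𝔮] [LieAlgebra ℝ 𝔮]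
    [Ring C] [Algebra ℝ C] {s : SuperOp 𝔤 C}
    {𝔫 : Submodule ℝ 𝔤} {hn : ∀ (Y : 𝔤), ∀ x ∈ 𝔫, ⁅Y, x⁆ ∈ 𝔫} {π : 𝔤 →ₗ[ℝ] 𝔮}
    (c : Core s 𝔫 hn π)
    {κ : Type} [Fintype κ] (bq : Module.Basis κ ℝ 𝔮) (sl : 𝔮 →ₗ[ℝ] 𝔤)
    (σ : 𝔤 →ₗ[ℝ] ↥𝔫)
    {ν : Type} [Fintype ν] (e : Module.Basis ν ℝ ↥𝔫)

/-- Partial horizontal projection along the lifts of a basis of `𝔮`. -/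
def PQ : Module.End ℝ C :=
  hp s c.θ (fun k => sl (bq k)) (fun k => bq.coord k ∘ₗ π) Finset.univ.toList

/-- The horizontal form `δ(α)`. -/
def δ : Module.Dual ℝ ↥𝔫 →ₗ[ℝ] C where
  toFun α := c.PQ bq sl (c.τ α) - c.θ (α ∘ₗ σ)
  map_add' x y := by
    rw [LinearMap.add_comp]; simp only [map_add]; abel
  map_smul' r x := by
    rw [LinearMap.smul_comp]; simp only [map_smul, smul_sub, RingHom.id_apply]

lemma δ_apply (α : Module.Dual ℝ ↥𝔫) :
    c.δ bq sl σ α = c.PQ bq sl (c.τ α) - c.θ (α ∘ₗ σ) := rfl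

/-- The homotopy operator. -/
def K : Module.End ℝ C :=
  ∑ a, LinearMap.mulLeft ℝ (c.δ bq sl σ (e.coord a)) ∘ₗ c.pd (e a : 𝔤)

lemma K_apply (x : C) : c.K bq sl σ e x =
    ∑ a, c.δ bq sl σ (e.coord a) * c.pd (e a : 𝔤) x := by
  simp [K]

lemma hp_mem_F (l : List κ) (x : C) (hx : x ∈ c.F) :
    hp s c.θ (fun k => sl (bq k)) (fun k => bq.coord k ∘ₗ π) l x ∈ c.F := by
  induction l with
  | nil => exact hx
  | cons k l ih =>
    rw [hp_cons]
    exact c.F.sub_mem ih (c.F_mul _ _ (c.F_θ _) (c.F_I _ _ ih))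

lemma PQ_mem_F (x : C) (hx : x ∈ c.F) : c.PQ bq sl x ∈ c.F := c.hp_mem_F bq sl _ x hx

lemma hp_odd (l : List κ) (x : C) (hx : s.ε x = - x) :
    s.ε (hp s c.θ (fun k => sl (bq k)) (fun k => bq.coord k ∘ₗ π) l x) =
      - hp s c.θ (fun k => sl (bq k)) (fun k => bq.coord k ∘ₗ π) l x := by
  induction l with
  | nil => exact hx
  | cons k l ih =>
    rw [hp_cons, map_sub, s.ε_mul, c.θ_ε]
    set y := hp s c.θ (fun k => sl (bq k)) (fun k => bq.coord k ∘ₗ π) l x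
    have : s.ε (s.I (sl (bq k)) y) = s.I (sl (bq k)) y := by
      have h := s.I_ε (sl (bq k)) y
      rw [ih, map_neg] at h
      exact (neg_injective h).symm
    rw [this, ih]
    noncomm_ring

lemma hp_deg (l : List κ) (x : C) (hx : s.deg x = x) :
    s.deg (hp s c.θ (fun k => sl (bq k)) (fun k => bq.coord k ∘ₗ π) l x) =
      hp s c.θ (fun k => sl (bq k)) (fun k => bq.coord k ∘ₗ π) l x := by
  induction l with
  | nil => exact hx
  | cons k l ih =>
    rw [hp_cons, map_sub, s.deg_mul, c.deg_θ, s.deg_I, ih]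
    noncomm_ring

lemma δ_odd (α : Module.Dual ℝ ↥𝔫) : s.ε (c.δ bq sl σ α) = - c.δ bq sl σ α := by
  rw [δ_apply, map_sub, c.θ_ε, PQ, c.hp_odd bq sl _ _ (c.τ_ε α)]
  abel

lemma δ_deg (α : Module.Dual ℝ ↥𝔫) : s.deg (c.δ bq sl σ α) = c.δ bq sl σ α := by
  rw [δ_apply, map_sub, c.deg_θ, PQ, c.hp_deg bq sl _ _ (c.deg_τ α)]

lemma δ_hor (hsl : ∀ q, π (sl q) = q) (hπ𝔫 : ∀ X : ↥𝔫, π (X : 𝔤) = 0)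
    (hσ : ∀ X : ↥𝔫, σ (X : 𝔤) = X) (hσs : ∀ q, σ (sl q) = 0)
    (hdec : ∀ X : 𝔤, X = σ X + sl (π X))
    (α : Module.Dual ℝ ↥𝔫) (Y : 𝔤) : s.I Y (c.δ bq sl σ α) = 0 := by
  classical
  have hd : ∀ i j, i ≠ j → (bq.coord i ∘ₗ π) (sl (bq j)) = 0 := by
    intro i j h
    simp [hsl, h.symm]
  have hd1 : ∀ i, (bq.coord i ∘ₗ π) (sl (bq i)) = 1 := by
    intro i; simp [hsl]
  have h1 : ∀ k, s.I (sl (bq k)) (c.δ bq sl σ α) = 0 := by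
    intro k
    rw [δ_apply, map_sub, c.I_θ, PQ]
    rw [I_hp_zero s c.θ (fun k => sl (bq k)) (fun k => bq.coord k ∘ₗ π) c.θ_ε c.I_θ hd hd1 k _
      (by simp)]
    simp [hσs]
  have h2 : ∀ q, s.I (sl q) (c.δ bq sl σ α) = 0 := by
    intro q
    rw [← bq.sum_repr q]
    simp only [map_sum, map_smul, LinearMap.sum_apply, LinearMap.smul_apply, h1, smul_zero,
      Finset.sum_const_zero]
  have h3 : ∀ X : ↥𝔫, s.I (X : 𝔤) (c.δ bq sl σ α) = 0 := by
    intro X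
    rw [δ_apply, map_sub, c.I_θ, PQ, I_hp_comm s c.θ _ _ c.θ_ε c.I_θ _ (by simp [hπ𝔫]), c.I_τ,
      map_smul, hp_fixed _ _ _ _ _ _ (fun Y => s.I_one Y)]
    simp [hσ]
  rw [hdec Y, map_add, LinearMap.add_apply, h2, h3, add_zero]

lemma δ_L {ι' : Type} [Fintype ι'] (b : Module.Basis ι' ℝ 𝔤)
    (hsl : ∀ q, π (sl q) = q) (hπ𝔫 : ∀ X : ↥𝔫, π (X : 𝔤) = 0)
    (hσ : ∀ X : ↥𝔫, σ (X : 𝔤) = X) (hσs : ∀ q, σ (sl q) = 0)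
    (hdec : ∀ X : 𝔤, X = σ X + sl (π X))
    (α : Module.Dual ℝ ↥𝔫) (Y : 𝔤) :
    s.L Y (c.δ bq sl σ α) = - c.δ bq sl σ (α ∘ₗ adRes 𝔫 hn Y) := by
  rw [← add_eq_zero_iff_eq_neg]
  have hh := c.δ_hor bq sl σ hsl hπ𝔫 hσ hσs hdec
  refine hor_ideal_zero s c.θ b c.θ_ε c.I_θ _ ?_ ?_
  · intro X
    have := s.L_I Y X (c.δ bq sl σ α)
    rw [hh, hh, map_zero, add_zero] at this
    rw [map_add, ← this, hh, add_zero]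
  · set J := Submodule.span ℝ {x | ∃ γ c', x = c.θ γ * c'} with hJ
    have hθJ : ∀ γ, c.θ γ ∈ J := fun γ => Submodule.subset_span ⟨γ, 1, by simp⟩
    have hLJ : ∀ x ∈ J, s.L Y x ∈ J := by
      intro x hx
      induction hx using Submodule.span_induction with
      | mem x hx =>
        obtain ⟨γ, c', rfl⟩ := hx
        rw [s.L_mul, c.L_θ, ← map_neg]
        exact J.add_mem (Submodule.subset_span ⟨_, _, rfl⟩) (Submodule.subset_span ⟨_, _, rfl⟩)
      | zero => simp
      | add x y _ _ h1 h2 => rw [map_add]; exact J.add_mem h1 h2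
      | smul a x _ h => rw [map_smul]; exact J.smul_mem _ h
    have hP : ∀ x, c.PQ bq sl x - x ∈ J := fun x => hp_sub_mem _ _ _ _ _ _
    have key : s.L Y (c.δ bq sl σ α) + c.δ bq sl σ (α ∘ₗ adRes 𝔫 hn Y) =
        s.L Y (c.PQ bq sl (c.τ α) - c.τ α) - s.L Y (c.θ (α ∘ₗ σ)) +
        (c.PQ bq sl (c.τ (α ∘ₗ adRes 𝔫 hn Y)) - c.τ (α ∘ₗ adRes 𝔫 hn Y))
        - c.θ ((α ∘ₗ adRes 𝔫 hn Y) ∘ₗ σ) := by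
      simp only [δ_apply, map_sub, c.L_τ]
      abel
    rw [key]
    exact J.sub_mem (J.add_mem (J.sub_mem (hLJ _ (hP _)) (hLJ _ (hθJ _))) (hP _)) (hθJ _)

lemma K_mul (x y : C) : c.K bq sl σ e (x * y) =
    c.K bq sl σ e x * y + s.ε x * c.K bq sl σ e y := by
  simp only [K_apply, c.pd_mul, Finset.sum_mul, Finset.mul_sum, ← Finset.sum_add_distrib]
  refine Finset.sum_congr rfl fun a _ => ?_
  rw [mul_add, mul_assoc, ← mul_assoc _ x, s.comm_odd (c.δ_odd bq sl σ _) x, mul_assoc]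

lemma K_ε (x : C) : c.K bq sl σ e (s.ε x) = - s.ε (c.K bq sl σ e x) := by
  simp only [K_apply, c.pd_ε, map_sum, s.ε_mul, δ_odd, neg_mul, Finset.sum_neg_distrib, neg_neg]

lemma K_deg (x : C) : s.deg (c.K bq sl σ e x) = c.K bq sl σ e (s.deg x) - c.K bq sl σ e x := by
  simp only [K_apply, map_sum, s.deg_mul, δ_deg, c.deg_pd, ← Finset.sum_sub_distrib]
  refine Finset.sum_congr rfl fun a _ => ?_
  rw [mul_sub, mul_smul_comm]
  module

lemma K_F (x : C) (hx : x ∈ c.F) : c.K bq sl σ e x = 0 := by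
  simp [K_apply, c.F_pd _ x hx]

lemma K_I (hδI : ∀ α Y, s.I Y (c.δ bq sl σ α) = 0) (Y : 𝔤) (x : C) :
    s.I Y (c.K bq sl σ e x) = - c.K bq sl σ e (s.I Y x) := by
  simp only [K_apply, map_sum, s.I_mul, hδI, δ_odd, c.I_pd, zero_mul, zero_add, neg_mul,
    Finset.sum_neg_distrib]

lemma K_L (hδL : ∀ α Y, s.L Y (c.δ bq sl σ α) = - c.δ bq sl σ (α ∘ₗ adRes 𝔫 hn Y))
    (Y : 𝔤) (x : C) :
    s.L Y (c.K bq sl σ e x) = c.K bq sl σ e (s.L Y x) := by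
  simp only [K_apply, map_sum, s.L_mul, hδL, c.L_pd, mul_add, Finset.sum_add_distrib]
  have h1 : ∀ α : Module.Dual ℝ ↥𝔫, α = ∑ a, α (e a) • e.coord a := by
    intro α
    apply e.ext
    intro j
    classical
    simp
  have h2 : ∀ a, c.pd ⁅Y, (e a : 𝔤)⁆ x = ∑ b', e.coord b' (adRes 𝔫 hn Y (e a)) •
      c.pd (e b' : 𝔤) x := by
    intro a
    have h : (⁅Y, (e a : 𝔤)⁆ : 𝔤) = ((adRes 𝔫 hn Y (e a) : ↥𝔫) : 𝔤) := rfl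
    rw [h]
    conv_lhs => rw [← e.sum_repr (adRes 𝔫 hn Y (e a))]
    simp only [Submodule.coe_sum, Submodule.coe_smul, map_sum, map_smul, LinearMap.sum_apply,
      LinearMap.smul_apply, Module.Basis.coord_apply]
  have h3 : ∑ a, -c.δ bq sl σ (e.coord a ∘ₗ adRes 𝔫 hn Y) * c.pd (e a : 𝔤) x +
      ∑ a, c.δ bq sl σ (e.coord a) * c.pd ⁅Y, (e a : 𝔤)⁆ x = 0 := by
    have : ∀ a, c.δ bq sl σ (e.coord a ∘ₗ adRes 𝔫 hn Y) =
        ∑ b', e.coord a (adRes 𝔫 hn Y (e b')) • c.δ bq sl σ (e.coord b') := by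
      intro a
      conv_lhs => rw [h1 (e.coord a ∘ₗ adRes 𝔫 hn Y)]
      simp only [map_sum, map_smul, LinearMap.comp_apply]
    simp only [this, h2, neg_mul, Finset.sum_mul, Finset.mul_sum, Finset.sum_neg_distrib]
    rw [Finset.sum_comm, neg_add_eq_zero]
    refine Finset.sum_congr rfl fun a _ => Finset.sum_congr rfl fun b' _ => ?_
    rw [smul_mul_assoc, mul_smul_comm]
  rw [add_left_comm, h3, add_zero]

/-- `M = DK + KD`. -/
def M : Module.End ℝ C := s.D ∘ₗ c.K bq sl σ e + c.K bq sl σ e ∘ₗ s.D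

lemma M_apply (x : C) : c.M bq sl σ e x = s.D (c.K bq sl σ e x) + c.K bq sl σ e (s.D x) := rfl

lemma M_mul (x y : C) : c.M bq sl σ e (x * y) = c.M bq sl σ e x * y + x * c.M bq sl σ e y := by
  simp only [M_apply, K_mul, s.D_mul, map_add, K_ε, s.D_ε, s.ε_ε]
  noncomm_ring

lemma M_F (x : C) (hx : x ∈ c.F) : c.M bq sl σ e x = 0 := by
  rw [M_apply, c.K_F _ _ _ _ _ hx, c.K_F _ _ _ _ _ (c.F_D _ hx), map_zero, add_zero]

lemma M_D (x : C) : c.M bq sl σ e (s.D x) = s.D (c.M bq sl σ e x) := by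
  simp [M_apply, s.D_D]

lemma K_θ (γ : Module.Dual ℝ 𝔤) : c.K bq sl σ e (c.θ γ) = 0 := by
  simp [K_apply, c.pd_θ]

lemma M_θ (γ : Module.Dual ℝ 𝔤) : c.M bq sl σ e (c.θ γ) = c.δ bq sl σ (γ ∘ₗ 𝔫.subtype) := by
  have h0 : c.K bq sl σ e (s.D (c.θ γ) - c.Ω γ) = 0 := by
    have h := c.D_θ γ
    generalize s.D (c.θ γ) - c.Ω γ = y at h
    induction h using Submodule.span_induction with
    | mem x hx =>
      obtain ⟨γ, γ', rfl⟩ := hx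
      simp [K_mul, K_θ]
    | zero => simp
    | add x y _ _ h1 h2 => rw [map_add, h1, h2, add_zero]
    | smul a x _ h => rw [map_smul, h, smul_zero]
  rw [map_sub, sub_eq_zero] at h0
  rw [M_apply, K_θ, map_zero, zero_add, h0, K_apply]
  have h1 : γ ∘ₗ 𝔫.subtype = ∑ a, γ (e a : 𝔤) • e.coord a := by
    apply e.ext
    intro j
    classical
    simp [Finsupp.single_apply]
  rw [h1]
  simp [c.pd_Ω]

lemma M_δ (hσ : ∀ X : ↥𝔫, σ (X : 𝔤) = X) (α : Module.Dual ℝ ↥𝔫) :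
    c.M bq sl σ e (c.δ bq sl σ α) = - c.δ bq sl σ α := by
  conv_lhs => rw [δ_apply, map_sub, M_θ, c.M_F _ _ _ _ _ (c.PQ_mem_F _ _ _ (c.F_τ α)), zero_sub]
  congr 2
  ext X
  simp [hσ]

/-- Eigenvectors. -/
inductive Eig : ℕ → C → Prop
  | base (x : C) (hx : x ∈ c.F) : Eig 0 x
  | de (k : ℕ) (x : C) (α : Module.Dual ℝ ↥𝔫) (h : Eig k x) : Eig (k+1) (c.δ bq sl σ α * x)
  | ed (k : ℕ) (x : C) (α : Module.Dual ℝ ↥𝔫) (h : Eig k x) :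
      Eig (k+1) (s.D (c.δ bq sl σ α) * x)

lemma Eig_M (hσ : ∀ X : ↥𝔫, σ (X : 𝔤) = X) (k : ℕ) (x : C) (h : c.Eig bq sl σ k x) :
    c.M bq sl σ e x = -(k : ℝ) • x := by
  induction h with
  | base x hx => simp [c.M_F _ _ _ _ x hx]
  | de k x α h ih =>
    rw [M_mul, ih, c.M_δ bq sl σ e hσ]
    push_cast
    rw [mul_smul_comm, neg_mul]
    module
  | ed k x α h ih =>
    rw [M_mul, ih, M_D, c.M_δ bq sl σ e hσ, map_neg]
    push_cast
    rw [mul_smul_comm, neg_mul]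
    module

lemma Eig_F (k : ℕ) (x : C) (h : c.Eig bq sl σ k x) : ∀ f ∈ c.F, c.Eig bq sl σ k (f * x) := by
  induction h with
  | base x hx => exact fun f hf => Eig.base _ (c.F_mul _ _ hf hx)
  | de k x α h ih =>
    intro f hf
    have : f * (c.δ bq sl σ α * x) = c.δ bq sl σ α * (s.ε f * x) := by
      rw [← mul_assoc, ← mul_assoc, s.comm_odd (c.δ_odd bq sl σ α), s.ε_ε]
    rw [this]
    exact Eig.de _ _ _ (ih _ (c.F_ε _ hf))
  | ed k x α h ih =>
    intro f hf
    have : f * (s.D (c.δ bq sl σ α) * x) = s.D (c.δ bq sl σ α) * (f * x) := by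
      have he : s.ε (s.D (c.δ bq sl σ α)) = s.D (c.δ bq sl σ α) := by
        have h := s.D_ε (c.δ bq sl σ α)
        rw [δ_odd, map_neg] at h
        exact (neg_injective h).symm
      rw [← mul_assoc, ← mul_assoc, s.comm_even he]
    rw [this]
    exact Eig.ed _ _ _ (ih _ hf)

lemma Eig_span (hdec : ∀ X : 𝔤, X = σ X + sl (π X)) :
    Submodule.span ℝ {x | ∃ k, c.Eig bq sl σ k x} = ⊤ := by
  set S := Submodule.span ℝ {x | ∃ k, c.Eig bq sl σ k x} with hS
  let R : Submodule ℝ C :=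
    { carrier := {r | ∀ x ∈ S, r * x ∈ S}
      add_mem' := fun {a b} ha hb x hx => by
        rw [add_mul]; exact S.add_mem (ha x hx) (hb x hx)
      zero_mem' := fun x _ => by simp
      smul_mem' := fun t a ha x hx => by
        rw [smul_mul_assoc]; exact S.smul_mem _ (ha x hx) }
  have hR : ∀ r, (∀ k x, c.Eig bq sl σ k x → ∃ k', c.Eig bq sl σ k' (r * x)) → r ∈ R := by
    intro r hr x hx
    induction hx using Submodule.span_induction with
    | mem x hx =>
      obtain ⟨k, hk⟩ := hx
      exact Submodule.subset_span (hr k x hk)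
    | zero => simp
    | add x y _ _ h1 h2 => rw [mul_add]; exact S.add_mem h1 h2
    | smul a x _ h => rw [mul_smul_comm]; exact S.smul_mem _ h
  have hRm : ∀ a b, a ∈ R → b ∈ R → a * b ∈ R := by
    intro a b ha hb x hx
    rw [mul_assoc]; exact ha _ (hb _ hx)
  have hF : c.F ≤ R := fun f hf => hR f fun k x hx => ⟨k, c.Eig_F bq sl σ k x hx f hf⟩
  have hδ : ∀ α, c.δ bq sl σ α ∈ R := fun α => hR _ fun k x hx => ⟨k+1, Eig.de _ _ _ hx⟩
  have hDδ : ∀ α, s.D (c.δ bq sl σ α) ∈ R := fun α => hR _ fun k x hx => ⟨k+1, Eig.ed _ _ _ hx⟩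
  have hγ : ∀ γ : Module.Dual ℝ 𝔤, γ = (γ ∘ₗ 𝔫.subtype) ∘ₗ σ + (γ ∘ₗ sl) ∘ₗ π := by
    intro γ
    ext X
    conv_lhs => rw [hdec X, map_add]
    rfl
  have hθσ : ∀ α : Module.Dual ℝ ↥𝔫, c.θ (α ∘ₗ σ) = c.PQ bq sl (c.τ α) - c.δ bq sl σ α := by
    intro α; rw [δ_apply]; abel
  have hPF : ∀ α, c.PQ bq sl (c.τ α) ∈ c.F := fun α => c.PQ_mem_F _ _ _ (c.F_τ α)
  have hθ : ∀ γ, c.θ γ ∈ R := by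
    intro γ
    rw [hγ γ, map_add, hθσ]
    exact R.add_mem (R.sub_mem (hF (hPF _)) (hδ _)) (hF (c.F_θ _))
  have hΩ : ∀ γ, c.Ω γ ∈ R := by
    intro γ
    rw [hγ γ, map_add]
    refine R.add_mem ?_ (hF (c.F_Ω _))
    set γ1 := (γ ∘ₗ 𝔫.subtype) ∘ₗ σ with hγ1
    have h1 : s.D (c.θ γ1) ∈ R := by
      rw [hγ1, hθσ, map_sub]
      exact R.sub_mem (hF (c.F_D _ (hPF _))) (hDδ _)
    have h2 : s.D (c.θ γ1) - c.Ω γ1 ∈ R := by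
      refine (Submodule.span_le.mpr ?_) (c.D_θ γ1)
      rintro x ⟨a, b, rfl⟩
      exact hRm _ _ (hθ _) (hθ _)
    have := R.sub_mem h1 h2
    simpa using this
  have hRt := c.gen R hF hθ hΩ hRm
  have h1S : (1 : C) ∈ S := Submodule.subset_span ⟨0, Eig.base _ c.F_one⟩
  rw [eq_top_iff]
  intro x _
  have hx : x ∈ R := by rw [hRt]; trivial
  have := hx 1 h1S
  simpa using this

end Core

/-- The operators `∏_{c=1}^k (1 + M/c)`. -/
def Tk {C : Type} [AddCommGroup C] [Module ℝ C] (M : Module.End ℝ C) : ℕ → Module.End ℝ C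
  | 0 => LinearMap.id
  | k+1 => Tk M k ∘ₗ (LinearMap.id + ((k+1 : ℝ)⁻¹) • M)

lemma Tk_eig {C : Type} [AddCommGroup C] [Module ℝ C] (M : Module.End ℝ C) (k j : ℕ) (x : C)
    (hx : M x = -(j : ℝ) • x) : (0 < j → j ≤ k → Tk M k x = 0) ∧ (j = 0 → Tk M k x = x) := by
  induction k with
  | zero => exact ⟨fun h1 h2 => by omega, fun _ => rfl⟩
  | succ k ih =>
    have h : Tk M (k+1) x = (1 - (k+1 : ℝ)⁻¹ * j) • Tk M k x := by
      simp only [Tk, LinearMap.comp_apply, LinearMap.add_apply, LinearMap.smul_apply, hx,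
        LinearMap.id_apply, map_add, map_smul]
      module
    constructor
    · intro h1 h2
      rcases Nat.lt_or_ge k j with h3 | h3
      · have : j = k + 1 := by omega
        subst this
        rw [h]
        push_cast
        rw [inv_mul_cancel₀ (by positivity), sub_self, zero_smul]
      · rw [h, ih.1 h1 h3, smul_zero]
    · intro h1
      rw [h, ih.2 h1, h1]; simp

theorem Core.exists_Tk {𝔤 𝔮 C : Type} [LieRing 𝔤] [LieAlgebra ℝ 𝔤] [LieRing 𝔮] [LieAlgebra ℝ 𝔮]
    [Ring C] [Algebra ℝ C] {s : SuperOp 𝔤 C}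
    {𝔫 : Submodule ℝ 𝔤} {hn : ∀ (Y : 𝔤), ∀ x ∈ 𝔫, ⁅Y, x⁆ ∈ 𝔫} {π : 𝔤 →ₗ[ℝ] 𝔮}
    (c : Core s 𝔫 hn π)
    {ι' : Type} [Fintype ι'] (b : Module.Basis ι' ℝ 𝔤)
    {κ : Type} [Fintype κ] (bq : Module.Basis κ ℝ 𝔮)
    (hπsurj : Function.Surjective π) (hπker : ∀ X : 𝔤, π X = 0 ↔ X ∈ 𝔫) :
    ∃ K : Module.End ℝ C, (∀ Y x, s.I Y (K x) = - K (s.I Y x)) ∧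
      (∀ Y x, s.L Y (K x) = K (s.L Y x)) ∧
      (∀ x, s.deg (K x) = K (s.deg x) - K x) ∧
      (∀ x ∈ c.F, K x = 0) ∧
      (∀ x, ∃ k, Tk (s.D ∘ₗ K + K ∘ₗ s.D) k x ∈ c.F) := by
  classical
  obtain ⟨sl, hsl'⟩ := π.exists_rightInverse_of_surjective (LinearMap.range_eq_top.mpr hπsurj)
  have hsl : ∀ q, π (sl q) = q := fun q => LinearMap.congr_fun hsl' q
  have hπ𝔫 : ∀ X : ↥𝔫, π (X : 𝔤) = 0 := fun X => (hπker _).mpr X.2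
  let σ : 𝔤 →ₗ[ℝ] ↥𝔫 := LinearMap.codRestrict 𝔫 (LinearMap.id - sl ∘ₗ π) (by
    intro X; rw [← hπker]; simp [hsl])
  have hσv : ∀ X, ((σ X : ↥𝔫) : 𝔤) = X - sl (π X) := fun X => rfl
  have hσ : ∀ X : ↥𝔫, σ (X : 𝔤) = X := by
    intro X; apply Subtype.ext; rw [hσv, hπ𝔫]; simp
  have hσs : ∀ q, σ (sl q) = 0 := by
    intro q; apply Subtype.ext; rw [hσv, hsl]; simp
  have hdec : ∀ X : 𝔤, X = σ X + sl (π X) := by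
    intro X; rw [hσv]; simp
  have : Module.Finite ℝ 𝔤 := Module.Finite.of_basis b
  let e := Module.finBasis ℝ ↥𝔫
  have hδI := c.δ_hor bq sl σ hsl hπ𝔫 hσ hσs hdec
  have hδL := c.δ_L bq sl σ b hsl hπ𝔫 hσ hσs hdec
  refine ⟨c.K bq sl σ e, c.K_I bq sl σ e hδI, c.K_L bq sl σ e hδL, c.K_deg bq sl σ e,
    c.K_F bq sl σ e, ?_⟩
  have key : ∀ x : C, ∃ k, ∀ k' ≥ k, Tk (c.M bq sl σ e) k' x ∈ c.F := by
    intro x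
    have hx : x ∈ Submodule.span ℝ {x | ∃ k, c.Eig bq sl σ k x} := by
      rw [c.Eig_span bq sl σ hdec]; trivial
    induction hx using Submodule.span_induction with
    | mem x hx =>
      obtain ⟨j, hj⟩ := hx
      refine ⟨j, fun k' hk' => ?_⟩
      have hM := Tk_eig _ k' j x (c.Eig_M bq sl σ e hσ j x hj)
      rcases Nat.eq_zero_or_pos j with h0 | h0
      · rw [hM.2 h0]
        subst h0
        cases hj with
        | base _ hx => exact hx
      · rw [hM.1 h0 hk']; exact c.F.zero_mem
    | zero => exact ⟨0, fun k' _ => by simp⟩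
    | add x y _ _ h1 h2 =>
      obtain ⟨k1, h1⟩ := h1
      obtain ⟨k2, h2⟩ := h2
      refine ⟨max k1 k2, fun k' hk' => ?_⟩
      rw [map_add]
      exact c.F.add_mem (h1 _ (le_trans (le_max_left _ _) hk'))
        (h2 _ (le_trans (le_max_right _ _) hk'))
    | smul a x _ h =>
      obtain ⟨k1, h1⟩ := h
      exact ⟨k1, fun k' hk' => by rw [map_smul]; exact c.F.smul_mem _ (h1 _ hk')⟩
  intro x
  obtain ⟨k, hk⟩ := key x
  exact ⟨k, hk k le_rfl⟩

end

open scoped TensorProduct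
noncomputable section

/-! ### The universal property of the Weil algebra -/

lemma ins_list {ι : Type} [LinearOrder ι] (j : ι) (l : List ι) (hl : l.Pairwise (· < ·)) :
    ∃ (r : ℝ) (l2 : List ι), l2.Pairwise (· < ·) ∧ (∀ i ∈ l2, i = j ∨ i ∈ l) ∧
      ∀ (T : Type) [Ring T] [Algebra ℝ T] (t : ι → T), (∀ i k, t i * t k = -(t k * t i)) →
        t j * (l.map t).prod = r • (l2.map t).prod := by
  induction l with
  | nil => exact ⟨1, [j], by simp, by simp, fun T _ _ t ht => by simp⟩
  | cons a l ih =>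
    rw [List.pairwise_cons] at hl
    rcases lt_trichotomy j a with h | h | h
    · refine ⟨1, j :: a :: l, ?_, by simp, fun T _ _ t ht => by simp⟩
      rw [List.pairwise_cons, List.pairwise_cons]
      refine ⟨?_, hl⟩
      intro x hx
      rcases List.mem_cons.1 hx with rfl | hx
      · exact h
      · exact h.trans (hl.1 x hx)
    · refine ⟨0, [], by simp, by simp, fun T _ _ t ht => ?_⟩
      subst h
      have : t j * t j = 0 := eq_zero_of_self_neg (ht j j)
      rw [List.map_cons, List.prod_cons, ← mul_assoc, this]; simp
    · obtain ⟨r, l2, h1, h2, h3⟩ := ih hl.2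
      refine ⟨-r, a :: l2, ?_, ?_, fun T _ _ t ht => ?_⟩
      · rw [List.pairwise_cons]
        refine ⟨?_, h1⟩
        intro x hx
        rcases h2 x hx with rfl | hx
        · exact h
        · exact hl.1 x hx
      · intro i hi
        rcases List.mem_cons.1 hi with rfl | hi
        · simp
        · rcases h2 i hi with rfl | hi <;> simp [*]
      · rw [List.map_cons, List.prod_cons, ← mul_assoc, ht j a, neg_mul, mul_assoc, h3 T t ht]
        simp

lemma ins_sign {ι : Type} [LinearOrder ι] (j : ι) (S : Finset ι) :
    ∃ (r : ℝ) (S2 : Finset ι),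
      ∀ (T : Type) [Ring T] [Algebra ℝ T] (t : ι → T), (∀ i k, t i * t k = -(t k * t i)) →
        t j * ((S.sort (· ≤ ·)).map t).prod = r • ((S2.sort (· ≤ ·)).map t).prod := by
  obtain ⟨r, l2, h1, -, h3⟩ := ins_list j (S.sort (· ≤ ·)) (Finset.sortedLT_sort S).pairwise
  refine ⟨r, l2.toFinset, fun T _ _ t ht => ?_⟩
  rw [h3 T t ht]
  congr 3
  symm
  apply (List.toFinset_sort (r := (· ≤ ·)) (h1.imp (fun h => h.ne))).2
  exact h1.imp (fun h => h.le)

lemma list_pow_ins_notMem {ι : Type} [DecidableEq ι] {T : Type} [Ring T] (o : ι → T)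
    (j : ι) (m : ι →₀ ℕ) (l : List ι) (hj : j ∉ l) :
    l.map (fun i => o i ^ (m + Finsupp.single j 1 : ι →₀ ℕ) i) = l.map (fun i => o i ^ m i) := by
  apply List.map_congr_left
  intro i hi
  have : j ≠ i := fun h => hj (h ▸ hi)
  simp [Finsupp.single_apply, this]

lemma list_pow_ins {ι : Type} [DecidableEq ι] {T : Type} [Ring T] (o : ι → T)
    (ho : ∀ i k, o i * o k = o k * o i) (j : ι) (m : ι →₀ ℕ) (l : List ι) (hl : l.Nodup)
    (hj : j ∈ l) :
    o j * (l.map (fun i => o i ^ m i)).prod =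
      (l.map (fun i => o i ^ (m + Finsupp.single j 1 : ι →₀ ℕ) i)).prod := by
  induction l with
  | nil => simp at hj
  | cons a l ih =>
    rw [List.nodup_cons] at hl
    rw [List.map_cons, List.map_cons, List.prod_cons, List.prod_cons]
    by_cases h : j = a
    · subst h
      rw [list_pow_ins_notMem o j m l hl.1, ← mul_assoc, ← pow_succ']
      simp
    · have hj2 : j ∈ l := by simpa [h] using hj
      rw [← ih hl.2 hj2, ← mul_assoc, ← mul_assoc]
      have : Commute (o j) (o a ^ m a) := Commute.pow_right (ho j a) _
      rw [this.eq]
      simp [Finsupp.single_apply, h]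

/-- A free graded-commutative algebra on odd generators `θ` and even generators `Ω`. -/
structure FreeSC (ι : Type) [Fintype ι] [LinearOrder ι] (W : Type) [Ring W] [Algebra ℝ W] where
  θ : ι → W
  Ω : ι → W
  anti : ∀ i k, θ i * θ k = -(θ k * θ i)
  comm : ∀ i k, Ω i * Ω k = Ω k * Ω i
  comm2 : ∀ i k, Ω i * θ k = θ k * Ω i
  w : Module.Basis ((ι →₀ ℕ) × Finset ι) ℝ W
  hw : ∀ p : (ι →₀ ℕ) × Finset ι,
      w p = ((Finset.univ.sort (· ≤ ·)).map fun i => Ω i ^ p.1 i).prod *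
        ((p.2.sort (· ≤ ·)).map θ).prod

namespace FreeSC

variable {ι : Type} [Fintype ι] [LinearOrder ι] {W : Type} [Ring W] [Algebra ℝ W]
  (fs : FreeSC ι W)

/-- Monomials. -/
def mon {T : Type} [Ring T] (t o : ι → T) (p : (ι →₀ ℕ) × Finset ι) : T :=
  ((Finset.univ.sort (· ≤ ·)).map fun i => o i ^ p.1 i).prod * ((p.2.sort (· ≤ ·)).map t).prod

lemma mon_o {T : Type} [Ring T] (t o : ι → T) (ho : ∀ i k, o i * o k = o k * o i)
    (j : ι) (p : (ι →₀ ℕ) × Finset ι) :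
    o j * mon t o p = mon t o (p.1 + Finsupp.single j 1, p.2) := by
  rw [mon, mon, ← mul_assoc, list_pow_ins o ho j p.1 _ (Finset.sort_nodup _ _) (by simp)]

lemma mon_t (j : ι) (p : (ι →₀ ℕ) × Finset ι) :
    ∃ (r : ℝ) (q : (ι →₀ ℕ) × Finset ι), ∀ (T : Type) [Ring T] [Algebra ℝ T] (t o : ι → T),
      (∀ i k, t i * t k = -(t k * t i)) → (∀ i k, o i * t k = t k * o i) →
      t j * mon t o p = r • mon t o q := by
  obtain ⟨r, S2, h⟩ := ins_sign j p.2
  refine ⟨r, (p.1, S2), fun T _ _ t o ht hot => ?_⟩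
  rw [mon, mon, ← mul_assoc]
  have : Commute (t j) ((Finset.univ.sort (· ≤ ·)).map fun i => o i ^ p.1 i).prod := by
    apply Commute.list_prod_right
    intro x hx
    obtain ⟨i, -, rfl⟩ := List.mem_map.1 hx
    exact Commute.pow_right (hot i j).symm _
  rw [this.eq, mul_assoc, h T t ht, mul_smul_comm]

lemma mon_zero {T : Type} [Ring T] (t o : ι → T) : mon t o (0, ∅) = 1 := by
  have : ∀ l : List ι, (l.map fun _ => (1 : T)).prod = 1 := fun l => by induction l <;> simp_all
  simp [mon, this]

lemma hw2 (p : (ι →₀ ℕ) × Finset ι) : fs.w p = mon fs.θ fs.Ω p := fs.hw p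

/-- Induction principle. -/
lemma induct (P : W → Prop) (hadd : ∀ x y, P x → P y → P (x + y))
    (hsmul : ∀ (r : ℝ) x, P x → P (r • x)) (hone : P 1)
    (hθ : ∀ i x, P x → P (fs.θ i * x)) (hΩ : ∀ i x, P x → P (fs.Ω i * x)) (x : W) : P x := by
  have h0 : P 0 := by simpa using hsmul 0 1 hone
  have hT : ∀ l : List ι, P ((l.map fs.θ).prod) := by
    intro l
    induction l with
    | nil => simpa
    | cons a l ih => simpa using hθ a _ ih
  have hpow : ∀ (i : ι) (k : ℕ) (y : W), P y → P (fs.Ω i ^ k * y) := by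
    intro i k
    induction k with
    | zero => intro y hy; simpa using hy
    | succ k ih => intro y hy; rw [pow_succ, mul_assoc]; exact ih _ (hΩ _ _ hy)
  have hO : ∀ (m : ι →₀ ℕ) (l : List ι) (y : W), P y →
      P ((l.map fun i => fs.Ω i ^ m i).prod * y) := by
    intro m l y hy
    induction l with
    | nil => simpa using hy
    | cons a l ih => rw [List.map_cons, List.prod_cons, mul_assoc]; exact hpow _ _ _ ih
  have hb : ∀ p, P (fs.w p) := fun p => by rw [fs.hw]; exact hO _ _ _ (hT _)
  have := fs.w.mem_span x
  induction this using Submodule.span_induction with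
  | mem x h => obtain ⟨p, rfl⟩ := h; exact hb p
  | zero => exact h0
  | add x y _ _ hx hy => exact hadd x y hx hy
  | smul r x _ hx => exact hsmul r x hx

variable {T : Type} [Ring T] [Algebra ℝ T] (t o : ι → T)

/-- Linear lift. -/
def lin : W →ₗ[ℝ] T := fs.w.constr ℝ (mon t o)

lemma lin_w (p : (ι →₀ ℕ) × Finset ι) : fs.lin t o (fs.w p) = mon t o p := by
  simp [lin, Module.Basis.constr_basis]

lemma lin_one : fs.lin t o 1 = 1 := by
  rw [← mon_zero fs.θ fs.Ω, ← hw2, lin_w, mon_zero]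

lemma lin_Ω_mul (ho : ∀ i k, o i * o k = o k * o i) (j : ι) (x : W) :
    fs.lin t o (fs.Ω j * x) = o j * fs.lin t o x := by
  have : fs.lin t o ∘ₗ LinearMap.mulLeft ℝ (fs.Ω j) = LinearMap.mulLeft ℝ (o j) ∘ₗ fs.lin t o := by
    apply fs.w.ext
    intro p
    simp only [LinearMap.comp_apply, LinearMap.mulLeft_apply]
    rw [lin_w, hw2, mon_o _ _ fs.comm, ← hw2, lin_w, mon_o _ _ ho]
  exact LinearMap.congr_fun this x

lemma lin_θ_mul (ht : ∀ i k, t i * t k = -(t k * t i)) (hot : ∀ i k, o i * t k = t k * o i)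
    (j : ι) (x : W) : fs.lin t o (fs.θ j * x) = t j * fs.lin t o x := by
  have : fs.lin t o ∘ₗ LinearMap.mulLeft ℝ (fs.θ j) = LinearMap.mulLeft ℝ (t j) ∘ₗ fs.lin t o := by
    apply fs.w.ext
    intro p
    simp only [LinearMap.comp_apply, LinearMap.mulLeft_apply]
    obtain ⟨r, q, h⟩ := mon_t j p
    rw [lin_w, hw2, h W fs.θ fs.Ω fs.anti fs.comm2, ← hw2, map_smul, lin_w, h T t o ht hot]
  exact LinearMap.congr_fun this x

/-- The universal property. -/
lemma exists_lift (ht : ∀ i k, t i * t k = -(t k * t i)) (ho : ∀ i k, o i * o k = o k * o i)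
    (hot : ∀ i k, o i * t k = t k * o i) :
    ∃ f : W →ₐ[ℝ] T, (∀ i, f (fs.θ i) = t i) ∧ (∀ i, f (fs.Ω i) = o i) := by
  refine ⟨AlgHom.ofLinearMap (fs.lin t o) (fs.lin_one t o) ?_, ?_, ?_⟩
  · intro x y
    refine fs.induct (fun x => fs.lin t o (x * y) = fs.lin t o x * fs.lin t o y)
      ?_ ?_ ?_ ?_ ?_ x
    · intro a b ha hb; simp only [add_mul, map_add, ha, hb]
    · intro r a ha; simp only [smul_mul_assoc, map_smul, ha]
    · simp [fs.lin_one]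
    · intro i a ha; simp only [mul_assoc, fs.lin_θ_mul t o ht hot, ha]
    · intro i a ha; simp only [mul_assoc, fs.lin_Ω_mul t o ho, ha]
  · intro i
    have := fs.lin_θ_mul t o ht hot i 1
    simpa [fs.lin_one] using this
  · intro i
    have := fs.lin_Ω_mul t o ho i 1
    simpa [fs.lin_one] using this

/-- Two derivation-like identities: an extensionality principle for algebra maps. -/
lemma hom_ext {f g : W →ₐ[ℝ] T} (h1 : ∀ i, f (fs.θ i) = g (fs.θ i))
    (h2 : ∀ i, f (fs.Ω i) = g (fs.Ω i)) : f = g := by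
  ext x
  refine fs.induct (fun x => f x = g x) ?_ ?_ ?_ ?_ ?_ x
  · intro a b ha hb; simp only [map_add, ha, hb]
  · intro r a ha; simp only [map_smul, ha]
  · simp
  · intro i a ha; simp only [map_mul, ha, h1]
  · intro i a ha; simp only [map_mul, ha, h2]

/-- Partial derivative in `Ω` direction with prescribed scalar values. -/
lemma exists_pd (c : ι → ℝ) : ∃ δ : Module.End ℝ W, (∀ x y, δ (x * y) = δ x * y + x * δ y) ∧
    (∀ i, δ (fs.θ i) = 0) ∧ (∀ i, δ (fs.Ω i) = c i • 1) := by
  obtain ⟨f, h1, h2⟩ := fs.exists_lift (T := TrivSqZeroExt W W)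
    (fun i => TrivSqZeroExt.inl (fs.θ i))
    (fun i => TrivSqZeroExt.inl (fs.Ω i) + TrivSqZeroExt.inr (c i • (1 : W)))
    (by intro i k; ext <;> simp [fs.anti i k])
    (by intro i k; ext <;> simp [fs.comm i k]; abel)
    (by intro i k; ext <;> simp [fs.comm2 i k])
  have hfst : ∀ x, (f x).fst = x := by
    intro x
    have : (TrivSqZeroExt.fstHom ℝ W W).comp f = AlgHom.id ℝ W := by
      apply fs.hom_ext
      · intro i; simp [h1]
      · intro i; simp [h2]
    exact DFunLike.congr_fun this x
  refine ⟨(TrivSqZeroExt.sndHom W W).restrictScalars ℝ ∘ₗ f.toLinearMap, ?_, ?_, ?_⟩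
  · intro x y
    simp [hfst]; abel
  · intro i; simp [h1]
  · intro i; simp [h2]

end FreeSC
end

open scoped TensorProduct
noncomputable section

/-! ### Operations as super-operations -/

lemma eigen_eq {C : Type} [AddCommGroup C] [Module ℝ C] (T : Module.End ℝ C)
    (V : ℤ → Submodule ℝ C) (hV : ∀ n, ∀ x ∈ V n, T x = (n : ℝ) • x) (htop : ⨆ n, V n = ⊤)
    (n : ℤ) (x : C) : x ∈ V n ↔ T x = (n : ℝ) • x := by
  refine ⟨hV n x, fun hx => ?_⟩
  have hle : ∀ m, V m ≤ T.eigenspace (m : ℝ) := fun m y hy =>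
    Module.End.mem_eigenspace_iff.2 (hV m y hy)
  have hind : iSupIndep fun m : ℤ => T.eigenspace (m : ℝ) :=
    (Module.End.eigenspaces_iSupIndep T).comp (f := fun m : ℤ => (m : ℝ)) Int.cast_injective
  have hdis := hind n
  have hx' : x ∈ V n ⊔ ⨆ m, ⨆ (_ : m ≠ n), V m := by
    have : (⨆ m, V m) ≤ V n ⊔ ⨆ m, ⨆ (_ : m ≠ n), V m := by
      apply iSup_le
      intro m
      by_cases h : m = n
      · subst h; exact le_sup_left
      · exact le_sup_of_le_right (le_iSup₂_of_le m h le_rfl)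
    exact this (htop ▸ Submodule.mem_top)
  obtain ⟨y, hy, z, hz, rfl⟩ := Submodule.mem_sup.1 hx'
  have hz1 : z ∈ T.eigenspace (n : ℝ) := by
    have h1 := hV n y hy
    rw [Module.End.mem_eigenspace_iff]
    rw [map_add, h1, smul_add] at hx
    exact add_left_cancel hx
  have hz2 : z ∈ ⨆ m, ⨆ (_ : m ≠ n), T.eigenspace (m : ℝ) :=
    (iSup₂_mono fun m _ => hle m) hz
  have : z = 0 := (Submodule.disjoint_def.1 hdis) z hz1 hz2
  simpa [this] using hy

lemma sgn_zero : sgn 0 = 1 := by simp [sgn]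
lemma sgn_add (m n : ℤ) : sgn (m + n) = sgn m * sgn n := by
  unfold sgn; rcases Int.even_or_odd m with h | h <;> rcases Int.even_or_odd n with h' | h' <;>
    simp [Int.even_add, h, h', ← Int.not_even_iff_odd] <;> simp_all [← Int.not_even_iff_odd]
lemma sgn_succ (m : ℤ) : sgn (m + 1) = - sgn m := by
  rw [sgn_add]; simp [sgn]
lemma sgn_pred (m : ℤ) : sgn (m - 1) = - sgn m := by
  rw [sub_eq_add_neg, sgn_add]; simp [sgn]
lemma sgn_sq (m : ℤ) : sgn m * sgn m = 1 := by
  unfold sgn; split_ifs <;> simp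
lemma sgn_mul2 (m n : ℤ) : (sgn (m * n) : ℝ) = (1/2 : ℝ) * (1 + sgn m + sgn n - sgn n * sgn m) := by
  unfold sgn; rcases Int.even_or_odd m with h | h <;> rcases Int.even_or_odd n with h' | h' <;>
    simp_all [Int.even_mul, ← Int.not_even_iff_odd] <;> norm_num

namespace Operation
variable {𝔤 : Type} [LieRing 𝔤] [LieAlgebra ℝ 𝔤] {A : Type} [Ring A] [Algebra ℝ A]
  (op : Operation 𝔤 A)

/-- Diagonal operators. -/
def diag (f : ℤ → ℝ) : Module.End ℝ A :=
  letI := op.decomposition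
  (DirectSum.toModule ℝ ℤ A fun n => f n • (op.grading n).subtype) ∘ₗ
    (DirectSum.decomposeLinearEquiv op.grading).toLinearMap

lemma diag_apply (f : ℤ → ℝ) {n : ℤ} {a : A} (ha : a ∈ op.grading n) : op.diag f a = f n • a := by
  letI := op.decomposition
  simp only [diag, LinearMap.comp_apply, LinearEquiv.coe_coe]
  rw [DirectSum.decomposeLinearEquiv_apply, DirectSum.decompose_of_mem _ ha]
  rw [← DirectSum.lof_eq_of ℝ, DirectSum.toModule_lof]
  simp

lemma hind (P : A → Prop) (hh : ∀ n, ∀ a ∈ op.grading n, P a)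
    (hadd : ∀ x y, P x → P y → P (x + y)) (a : A) : P a := by
  letI := op.decomposition
  exact DirectSum.Decomposition.inductionOn op.grading (hh 0 0 (Submodule.zero_mem _))
    (fun {i} m => hh i m m.2) (fun x y => hadd x y) a

lemma iSup_grading : ⨆ n, op.grading n = ⊤ := by
  rw [eq_top_iff]
  intro a _
  exact op.hind (fun a => a ∈ ⨆ n, op.grading n) (fun n a ha => Submodule.mem_iSup_of_mem n ha)
    (fun x y => Submodule.add_mem _) a

/-- Parity. -/
def eps : Module.End ℝ A := op.diag fun n => (sgn n : ℝ)
/-- Degree. -/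
def dg : Module.End ℝ A := op.diag fun n => (n : ℝ)

lemma eps_of {n : ℤ} {a : A} (ha : a ∈ op.grading n) : op.eps a = (sgn n : ℝ) • a :=
  op.diag_apply _ ha
lemma dg_of {n : ℤ} {a : A} (ha : a ∈ op.grading n) : op.dg a = (n : ℝ) • a :=
  op.diag_apply _ ha

lemma eps_unique (e : Module.End ℝ A) (he : ∀ (n : ℤ), ∀ w ∈ op.grading n, e w = sgn n • w) :
    e = op.eps := by
  ext a
  refine op.hind (fun a => e a = op.eps a) ?_ ?_ a
  · intro n a ha; rw [he n a ha, op.eps_of ha, Int.cast_smul_eq_zsmul]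
  · intro x y hx hy; simp only [map_add, hx, hy]

lemma mem_grading_iff (n : ℤ) (a : A) : a ∈ op.grading n ↔ op.dg a = (n : ℝ) • a :=
  eigen_eq op.dg op.grading (fun _ _ ha => op.dg_of ha) op.iSup_grading n a

/-- The super-operation attached to an operation. -/
def toSuper : SuperOp 𝔤 A where
  ε := op.eps
  ε_one := by rw [op.eps_of op.one_mem]; simp [sgn_zero]
  ε_mul a b := by
    refine op.hind (fun a => op.eps (a * b) = op.eps a * op.eps b) ?_ ?_ a
    · intro m a ha
      refine op.hind (fun b => op.eps (a * b) = op.eps a * op.eps b) ?_ ?_ b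
      · intro n b hb
        rw [op.eps_of ha, op.eps_of hb, op.eps_of (op.mul_mem ha hb), sgn_add]
        rw [smul_mul_smul_comm]; push_cast; rfl
      · intro x y hx hy; simp only [mul_add, map_add, hx, hy]
    · intro x y hx hy; simp only [add_mul, map_add, hx, hy]
  ε_ε a := by
    refine op.hind (fun a => op.eps (op.eps a) = a) ?_ ?_ a
    · intro m a ha
      rw [op.eps_of ha, map_smul, op.eps_of ha, smul_smul]
      have := sgn_sq m
      rw [← Int.cast_mul, this]; simp
    · intro x y hx hy; simp only [map_add, hx, hy]
  scomm a b := by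
    refine op.hind (fun a => a * b = (1/2 : ℝ) • (b * a + b * op.eps a + op.eps b * a -
      op.eps b * op.eps a)) ?_ ?_ a
    · intro m a ha
      refine op.hind (fun b => a * b = (1/2 : ℝ) • (b * a + b * op.eps a + op.eps b * a -
        op.eps b * op.eps a)) ?_ ?_ b
      · intro n b hb
        rw [op.supercomm ha hb, op.eps_of ha, op.eps_of hb, ← Int.cast_smul_eq_zsmul ℝ, sgn_mul2]
        simp only [smul_mul_assoc, mul_smul_comm]
        module
      · intro x y hx hy; simp only [mul_add, add_mul, map_add]; rw [hx, hy]; module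
    · intro x y hx hy; simp only [mul_add, add_mul, map_add]; rw [hx, hy]; module
  D := op.d
  D_mul a b := by
    refine op.hind (fun a => op.d (a * b) = op.d a * b + op.eps a * op.d b) ?_ ?_ a
    · intro m a ha
      rw [op.d_mul ha, op.eps_of ha, ← Int.cast_smul_eq_zsmul ℝ, smul_mul_assoc]
    · intro x y hx hy; simp only [add_mul, map_add, hx, hy]; abel
  D_ε a := by
    refine op.hind (fun a => op.d (op.eps a) = - op.eps (op.d a)) ?_ ?_ a
    · intro m a ha
      rw [op.eps_of ha, op.eps_of (op.d_mem ha), sgn_succ]; simp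
    · intro x y hx hy; simp only [map_add, hx, hy]; abel
  D_D a := LinearMap.congr_fun op.d_sq a
  deg := op.dg
  deg_mul a b := by
    refine op.hind (fun a => op.dg (a * b) = op.dg a * b + a * op.dg b) ?_ ?_ a
    · intro m a ha
      refine op.hind (fun b => op.dg (a * b) = op.dg a * b + a * op.dg b) ?_ ?_ b
      · intro n b hb
        rw [op.dg_of ha, op.dg_of hb, op.dg_of (op.mul_mem ha hb)]
        simp [add_smul]
      · intro x y hx hy; simp only [mul_add, map_add, hx, hy]; abel
    · intro x y hx hy; simp only [add_mul, map_add, hx, hy]; abel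
  deg_ε a := by
    refine op.hind (fun a => op.dg (op.eps a) = op.eps (op.dg a)) ?_ ?_ a
    · intro m a ha
      simp only [op.eps_of ha, op.dg_of ha, map_smul]; rw [smul_comm]
    · intro x y hx hy; simp only [map_add, hx, hy]
  deg_D a := by
    refine op.hind (fun a => op.dg (op.d a) = op.d (op.dg a) + op.d a) ?_ ?_ a
    · intro m a ha
      rw [op.dg_of ha, op.dg_of (op.d_mem ha)]; simp [add_smul]
    · intro x y hx hy; simp only [map_add, hx, hy]; abel
  I := op.I
  I_mul X a b := by
    refine op.hind (fun a => op.I X (a * b) = op.I X a * b + op.eps a * op.I X b) ?_ ?_ a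
    · intro m a ha
      rw [op.I_mul X ha, op.eps_of ha, ← Int.cast_smul_eq_zsmul ℝ, smul_mul_assoc]
    · intro x y hx hy; simp only [add_mul, map_add, hx, hy]; abel
  I_ε X a := by
    refine op.hind (fun a => op.I X (op.eps a) = - op.eps (op.I X a)) ?_ ?_ a
    · intro m a ha
      rw [op.eps_of ha, op.eps_of (op.I_mem X ha), sgn_pred]; simp
    · intro x y hx hy; simp only [map_add, hx, hy]; abel
  I_I X Y a := eq_neg_of_add_eq_zero_left (LinearMap.congr_fun (op.I_I X Y) a)
  deg_I X a := by
    refine op.hind (fun a => op.dg (op.I X a) = op.I X (op.dg a) - op.I X a) ?_ ?_ a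
    · intro m a ha
      rw [op.dg_of ha, op.dg_of (op.I_mem X ha)]; simp [sub_smul]
    · intro x y hx hy; simp only [map_add, hx, hy]; abel
  L := op.L
  cartan X a := LinearMap.congr_fun (op.cartan X) a
  L_I X Y a := sub_eq_iff_eq_add'.1 (LinearMap.congr_fun (op.L_I X Y) a)

end Operation

/-! ### Graded tensor products -/

/-- The tensor product of two super-operations, with the Koszul multiplication. -/
def Tw {𝔤 W A : Type} [LieRing 𝔤] [LieAlgebra ℝ 𝔤] [Ring W] [Algebra ℝ W] [Ring A] [Algebra ℝ A]
    (_ : SuperOp 𝔤 W) (_ : SuperOp 𝔤 A) : Type := W ⊗[ℝ] A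

namespace Tw
variable {𝔤 W A : Type} [LieRing 𝔤] [LieAlgebra ℝ 𝔤] [Ring W] [Algebra ℝ W] [Ring A] [Algebra ℝ A]
    (sW : SuperOp 𝔤 W) (sA : SuperOp 𝔤 A)

instance : AddCommGroup (Tw sW sA) := inferInstanceAs (AddCommGroup (W ⊗[ℝ] A))
instance : Module ℝ (Tw sW sA) := inferInstanceAs (Module ℝ (W ⊗[ℝ] A))

/-- pure tensors -/
def tm (w : W) (x : A) : Tw sW sA := (w ⊗ₜ[ℝ] x : W ⊗[ℝ] A)

lemma tm_add (w : W) (x y : A) : tm sW sA w (x + y) = tm sW sA w x + tm sW sA w y :=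
  TensorProduct.tmul_add _ _ _
lemma add_tm (w v : W) (x : A) : tm sW sA (w + v) x = tm sW sA w x + tm sW sA v x :=
  TensorProduct.add_tmul _ _ _
lemma tm_smul (r : ℝ) (w : W) (x : A) : tm sW sA w (r • x) = r • tm sW sA w x :=
  TensorProduct.tmul_smul _ _ _
lemma smul_tm (r : ℝ) (w : W) (x : A) : tm sW sA (r • w) x = r • tm sW sA w x :=
  TensorProduct.smul_tmul' _ _ _
lemma tm_neg (w : W) (x : A) : tm sW sA w (-x) = - tm sW sA w x :=
  TensorProduct.tmul_neg _ _
lemma neg_tm (w : W) (x : A) : tm sW sA (-w) x = - tm sW sA w x :=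
  TensorProduct.neg_tmul _ _
lemma tm_sub (w : W) (x y : A) : tm sW sA w (x - y) = tm sW sA w x - tm sW sA w y :=
  TensorProduct.tmul_sub _ _ _
lemma sub_tm (w v : W) (x : A) : tm sW sA (w - v) x = tm sW sA w x - tm sW sA v x :=
  TensorProduct.sub_tmul _ _ _

lemma tm_zero (w : W) : tm sW sA w 0 = 0 := TensorProduct.tmul_zero _ _
lemma zero_tm (x : A) : tm sW sA 0 x = 0 := TensorProduct.zero_tmul _ _

lemma ind (P : Tw sW sA → Prop) (h0 : P 0) (ht : ∀ w x, P (tm sW sA w x))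
    (ha : ∀ x y, P x → P y → P (x + y)) (x : Tw sW sA) : P x :=
  TensorProduct.induction_on (motive := P) x h0 ht ha

/-- maps -/
def mp (f : Module.End ℝ W) (g : Module.End ℝ A) : Module.End ℝ (Tw sW sA) :=
  (TensorProduct.map f g : Module.End ℝ (W ⊗[ℝ] A))

lemma mp_tm (f : Module.End ℝ W) (g : Module.End ℝ A) (w : W) (x : A) :
    mp sW sA f g (tm sW sA w x) = tm sW sA (f w) (g x) := rfl

/-- Koszul multiplication. -/
def mulL : Tw sW sA →ₗ[ℝ] Tw sW sA →ₗ[ℝ] Tw sW sA :=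
  let m : (W ⊗[ℝ] A) →ₗ[ℝ] (W ⊗[ℝ] A) →ₗ[ℝ] (W ⊗[ℝ] A) := LinearMap.mul ℝ (W ⊗[ℝ] A)
  let a : Module.End ℝ (W ⊗[ℝ] A) := TensorProduct.map sW.ε LinearMap.id
  let b : Module.End ℝ (W ⊗[ℝ] A) := TensorProduct.map LinearMap.id sA.ε
  (1/2 : ℝ) • (m + m.comp b + m.compl₂ a - (m.comp b).compl₂ a)

lemma mulL_tm (w v : W) (x y : A) : mulL sW sA (tm sW sA w x) (tm sW sA v y) =
    (1/2 : ℝ) • (tm sW sA (w * v) (x * y) + tm sW sA (w * v) (sA.ε x * y) +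
      tm sW sA (w * sW.ε v) (x * y) - tm sW sA (w * sW.ε v) (sA.ε x * y)) := by
  change (1/2 : ℝ) • ((w ⊗ₜ[ℝ] x) * (v ⊗ₜ[ℝ] y) + (w ⊗ₜ[ℝ] sA.ε x) * (v ⊗ₜ[ℝ] y) +
    (w ⊗ₜ[ℝ] x) * (sW.ε v ⊗ₜ[ℝ] y) - (w ⊗ₜ[ℝ] sA.ε x) * (sW.ε v ⊗ₜ[ℝ] y) : W ⊗[ℝ] A) = _
  simp only [Algebra.TensorProduct.tmul_mul_tmul]
  rfl

instance : Mul (Tw sW sA) := ⟨fun x y => mulL sW sA x y⟩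
instance : One (Tw sW sA) := ⟨tm sW sA 1 1⟩

lemma mul_def (x y : Tw sW sA) : x * y = mulL sW sA x y := rfl
lemma one_def : (1 : Tw sW sA) = tm sW sA 1 1 := rfl

lemma tm_mul (w v : W) (x y : A) : (tm sW sA w x) * (tm sW sA v y) =
    (1/2 : ℝ) • (tm sW sA (w * v) (x * y) + tm sW sA (w * v) (sA.ε x * y) +
      tm sW sA (w * sW.ε v) (x * y) - tm sW sA (w * sW.ε v) (sA.ε x * y)) :=
  mulL_tm sW sA w v x y

lemma tm_assoc (w v u : W) (x y z : A) :
    tm sW sA w x * tm sW sA v y * tm sW sA u z = tm sW sA w x * (tm sW sA v y * tm sW sA u z) := by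
  rw [mul_def sW sA (tm sW sA w x * tm sW sA v y), mul_def sW sA (tm sW sA w x) (_ * _)]
  rw [tm_mul, tm_mul]
  simp only [map_smul, map_add, map_sub, LinearMap.smul_apply, LinearMap.add_apply,
    LinearMap.sub_apply, mulL_tm]
  simp only [sW.ε_mul, sA.ε_mul, sW.ε_ε, sA.ε_ε, mul_assoc]
  module

instance : Ring (Tw sW sA) :=
  { (inferInstance : AddCommGroup (Tw sW sA)), (inferInstance : Mul (Tw sW sA)),
    (inferInstance : One (Tw sW sA)) with
    left_distrib := fun x y z => by simp only [mul_def, map_add]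
    right_distrib := fun x y z => by simp only [mul_def, map_add, LinearMap.add_apply]
    zero_mul := fun x => by simp only [mul_def, map_zero, LinearMap.zero_apply]
    mul_zero := fun x => by simp only [mul_def, map_zero]
    one_mul := fun x => by
      refine ind sW sA (fun x => 1 * x = x) ?_ ?_ ?_ x
      · simp only [mul_def, map_zero]
      · intro w x; rw [one_def, tm_mul]; simp only [sA.ε_one, one_mul]; module
      · intro x y hx hy; rw [mul_def] at *; rw [map_add, hx, hy]
    mul_one := fun x => by
      refine ind sW sA (fun x => x * 1 = x) ?_ ?_ ?_ x
      · simp only [mul_def, map_zero, LinearMap.zero_apply]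
      · intro w x; rw [one_def, tm_mul]; simp only [sW.ε_one, mul_one]; module
      · intro x y hx hy; rw [mul_def] at *; rw [map_add, LinearMap.add_apply, hx, hy]
    mul_assoc := fun x y z => by
      refine ind sW sA (fun x => x * y * z = x * (y * z)) ?_ ?_ ?_ x
      · simp only [mul_def, map_zero, LinearMap.zero_apply]
      · intro w x
        refine ind sW sA (fun y => tm sW sA w x * y * z = tm sW sA w x * (y * z)) ?_ ?_ ?_ y
        · simp only [mul_def, map_zero, LinearMap.zero_apply]
        · intro v y
          refine ind sW sA (fun z => tm sW sA w x * tm sW sA v y * z =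
            tm sW sA w x * (tm sW sA v y * z)) ?_ ?_ ?_ z
          · simp only [mul_def, map_zero]
          · intro u z; exact tm_assoc ..
          · intro p q hp hq; simp only [mul_def, map_add] at *; rw [hp, hq]
        · intro p q hp hq; simp only [mul_def, map_add, LinearMap.add_apply] at *; rw [hp, hq]
      · intro p q hp hq; simp only [mul_def, map_add, LinearMap.add_apply] at *; rw [hp, hq] }

instance : Algebra ℝ (Tw sW sA) :=
  Algebra.ofModule (fun r x y => by simp only [mul_def, map_smul, LinearMap.smul_apply])
    (fun r x y => by simp only [mul_def, map_smul])

lemma ind2 (P : Tw sW sA → Tw sW sA → Prop) (h0 : ∀ y, P 0 y) (h0' : ∀ x, P x 0)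
    (ht : ∀ w x v y, P (tm sW sA w x) (tm sW sA v y))
    (ha : ∀ x x' y, P x y → P x' y → P (x + x') y)
    (ha' : ∀ x y y', P x y → P x y' → P x (y + y')) (x y : Tw sW sA) : P x y := by
  refine ind sW sA (fun x => P x y) (h0 y) ?_ (fun a b => ha a b y) x
  intro w x
  exact ind sW sA (fun y => P _ y) (h0' _) (ht w x) (ha' _) y

/-- The total contraction, linear in the Lie algebra. -/
def IL : 𝔤 →ₗ[ℝ] Module.End ℝ (Tw sW sA) where
  toFun X := mp sW sA (sW.I X) LinearMap.id + mp sW sA sW.ε (sA.I X)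
  map_add' X Y := by
    ext x
    refine ind sW sA (fun x => _ = (_ : Module.End ℝ (Tw sW sA)) x) (by simp) ?_ ?_ x
    · intro w x
      simp only [LinearMap.add_apply, mp_tm, map_add, add_tm, tm_add]; abel
    · intro x y hx hy
      exact (LinearMap.map_add _ x y).trans ((congrArg₂ _ hx hy).trans (LinearMap.map_add _ x y).symm)
  map_smul' r X := by
    ext x
    refine ind sW sA (fun x => _ = (_ : Module.End ℝ (Tw sW sA)) x) (by simp) ?_ ?_ x
    · intro w x
      simp [LinearMap.add_apply, mp_tm, smul_tm, tm_smul]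
    · intro x y hx hy
      exact (LinearMap.map_add _ x y).trans ((congrArg₂ _ hx hy).trans (LinearMap.map_add _ x y).symm)

/-- The total Lie derivative, linear in the Lie algebra. -/
def LL : 𝔤 →ₗ[ℝ] Module.End ℝ (Tw sW sA) where
  toFun X := mp sW sA (sW.L X) LinearMap.id + mp sW sA LinearMap.id (sA.L X)
  map_add' X Y := by
    ext x
    refine ind sW sA (fun x => _ = (_ : Module.End ℝ (Tw sW sA)) x) (by simp) ?_ ?_ x
    · intro w x
      simp only [LinearMap.add_apply, mp_tm, map_add, add_tm, tm_add]; abel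
    · intro x y hx hy
      exact (LinearMap.map_add _ x y).trans ((congrArg₂ _ hx hy).trans (LinearMap.map_add _ x y).symm)
  map_smul' r X := by
    ext x
    refine ind sW sA (fun x => _ = (_ : Module.End ℝ (Tw sW sA)) x) (by simp) ?_ ?_ x
    · intro w x
      simp [LinearMap.add_apply, mp_tm, smul_tm, tm_smul]
    · intro x y hx hy
      exact (LinearMap.map_add _ x y).trans ((congrArg₂ _ hx hy).trans (LinearMap.map_add _ x y).symm)

/-- The total differential. -/
def DD : Module.End ℝ (Tw sW sA) := mp sW sA sW.D LinearMap.id + mp sW sA sW.ε sA.D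
/-- The total degree. -/
def dd : Module.End ℝ (Tw sW sA) := mp sW sA sW.deg LinearMap.id + mp sW sA LinearMap.id sA.deg

lemma IL_tm (X : 𝔤) (w : W) (x : A) : IL sW sA X (tm sW sA w x) =
    tm sW sA (sW.I X w) x + tm sW sA (sW.ε w) (sA.I X x) := rfl
lemma LL_tm (X : 𝔤) (w : W) (x : A) : LL sW sA X (tm sW sA w x) =
    tm sW sA (sW.L X w) x + tm sW sA w (sA.L X x) := rfl
lemma DD_tm (w : W) (x : A) : DD sW sA (tm sW sA w x) =
    tm sW sA (sW.D w) x + tm sW sA (sW.ε w) (sA.D x) := rfl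
lemma dd_tm (w : W) (x : A) : dd sW sA (tm sW sA w x) =
    tm sW sA (sW.deg w) x + tm sW sA w (sA.deg x) := rfl

/-- The tensor product super-operation. -/
def sop : SuperOp 𝔤 (Tw sW sA) where
  ε := mp sW sA sW.ε sA.ε
  ε_one := by rw [one_def, mp_tm, sW.ε_one, sA.ε_one]
  ε_mul x y := by
    refine ind2 sW sA (fun x y => mp sW sA sW.ε sA.ε (x * y) =
      mp sW sA sW.ε sA.ε x * mp sW sA sW.ε sA.ε y) ?_ ?_ ?_ ?_ ?_ x y
    · simp
    · simp
    · intro w x v y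
      simp only [tm_mul, map_smul, map_add, map_sub, mp_tm, sW.ε_mul, sA.ε_mul]
    · intro x x' y h h'; rw [add_mul, map_add, map_add, add_mul, h, h']
    · intro x x' y h h'; rw [mul_add, map_add, map_add, mul_add, h, h']
  ε_ε x := by
    refine ind sW sA (fun x => mp sW sA sW.ε sA.ε (mp sW sA sW.ε sA.ε x) = x) (by simp) ?_ ?_ x
    · intro w x; simp only [mp_tm, sW.ε_ε, sA.ε_ε]
    · intro x y hx hy; simp only [map_add, hx, hy]
  scomm x y := by
    refine ind2 sW sA (fun x y => x * y = (1/2 : ℝ) • (y * x + y * mp sW sA sW.ε sA.ε x +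
      mp sW sA sW.ε sA.ε y * x - mp sW sA sW.ε sA.ε y * mp sW sA sW.ε sA.ε x)) ?_ ?_ ?_ ?_ ?_ x y
    · simp
    · simp
    · intro w x v y
      rw [tm_mul, sW.scomm w v, sW.scomm w (sW.ε v), sA.scomm x y, sA.scomm (sA.ε x) y]
      simp only [tm_mul, mp_tm, sW.ε_ε, sA.ε_ε, tm_add, add_tm, tm_sub, sub_tm, smul_tm, tm_smul]
      module
    · intro x x' y h h'
      simp only [add_mul, mul_add, map_add]; rw [h, h']; module
    · intro x x' y h h'
      simp only [add_mul, mul_add, map_add]; rw [h, h']; module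
  D := DD sW sA
  D_mul x y := by
    refine ind2 sW sA (fun x y => DD sW sA (x * y) = DD sW sA x * y +
      mp sW sA sW.ε sA.ε x * DD sW sA y) ?_ ?_ ?_ ?_ ?_ x y
    · simp
    · simp
    · intro w x v y
      simp only [tm_mul, mp_tm, DD_tm, map_smul, map_add, map_sub, add_mul, mul_add,
        sW.D_mul, sA.D_mul, sW.ε_mul, sA.ε_mul, sW.ε_ε, sA.ε_ε, sW.D_ε, sA.D_ε,
        tm_add, add_tm, tm_sub, sub_tm, smul_tm, tm_smul, neg_mul, mul_neg, neg_tm, tm_neg]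
      module
    · intro x x' y h h'
      simp only [add_mul, map_add]; rw [h, h']; module
    · intro x x' y h h'
      simp only [mul_add, map_add]; rw [h, h']; module
  D_ε x := by
    refine ind sW sA (fun x => DD sW sA (mp sW sA sW.ε sA.ε x) =
      - mp sW sA sW.ε sA.ε (DD sW sA x)) (by simp) ?_ ?_ x
    · intro w x; simp only [mp_tm, DD_tm, map_add, sW.D_ε, sA.D_ε, neg_tm, tm_neg]; abel
    · intro x y hx hy; simp only [map_add, hx, hy]; abel
  D_D x := by
    refine ind sW sA (fun x => DD sW sA (DD sW sA x) = 0) (by simp) ?_ ?_ x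
    · intro w x
      simp only [DD_tm, map_add, sW.D_ε, sW.D_D, sA.D_D, neg_tm, zero_tm, tm_zero]
      abel
    · intro x y hx hy; simp only [map_add, hx, hy, add_zero]
  deg := dd sW sA
  deg_mul x y := by
    refine ind2 sW sA (fun x y => dd sW sA (x * y) = dd sW sA x * y +
      x * dd sW sA y) ?_ ?_ ?_ ?_ ?_ x y
    · simp
    · simp
    · intro w x v y
      simp only [tm_mul, dd_tm, map_smul, map_add, map_sub, add_mul, mul_add,
        sW.deg_mul, sA.deg_mul, sW.deg_ε, sA.deg_ε, tm_add, add_tm]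
      module
    · intro x x' y h h'
      simp only [add_mul, map_add]; rw [h, h']; module
    · intro x x' y h h'
      simp only [mul_add, map_add]; rw [h, h']; module
  deg_ε x := by
    refine ind sW sA (fun x => dd sW sA (mp sW sA sW.ε sA.ε x) =
      mp sW sA sW.ε sA.ε (dd sW sA x)) (by simp) ?_ ?_ x
    · intro w x; simp only [mp_tm, dd_tm, map_add, sW.deg_ε, sA.deg_ε]
    · intro x y hx hy; simp only [map_add, hx, hy]
  deg_D x := by
    refine ind sW sA (fun x => dd sW sA (DD sW sA x) = DD sW sA (dd sW sA x) + DD sW sA x)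
      (by simp) ?_ ?_ x
    · intro w x
      simp only [DD_tm, dd_tm, map_add, sW.deg_ε, sW.deg_D, sA.deg_D, add_tm, tm_add]; abel
    · intro x y hx hy; simp only [map_add, hx, hy]; abel
  I := IL sW sA
  I_mul X x y := by
    refine ind2 sW sA (fun x y => IL sW sA X (x * y) = IL sW sA X x * y +
      mp sW sA sW.ε sA.ε x * IL sW sA X y) ?_ ?_ ?_ ?_ ?_ x y
    · simp
    · simp
    · intro w x v y
      simp only [tm_mul, mp_tm, IL_tm, map_smul, map_add, map_sub, add_mul, mul_add,
        sW.I_mul, sA.I_mul, sW.ε_mul, sA.ε_mul, sW.ε_ε, sA.ε_ε, sW.I_ε, sA.I_ε,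
        tm_add, add_tm, tm_sub, sub_tm, smul_tm, tm_smul, neg_mul, mul_neg, neg_tm, tm_neg]
      module
    · intro x x' y h h'
      simp only [add_mul, map_add]; rw [h, h']; module
    · intro x x' y h h'
      simp only [mul_add, map_add]; rw [h, h']; module
  I_ε X x := by
    refine ind sW sA (fun x => IL sW sA X (mp sW sA sW.ε sA.ε x) =
      - mp sW sA sW.ε sA.ε (IL sW sA X x)) (by simp) ?_ ?_ x
    · intro w x; simp only [mp_tm, IL_tm, map_add, sW.I_ε, sA.I_ε, neg_tm, tm_neg]; abel
    · intro x y hx hy; simp only [map_add, hx, hy]; abel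
  I_I X Y x := by
    refine ind sW sA (fun x => IL sW sA X (IL sW sA Y x) = - IL sW sA Y (IL sW sA X x))
      (by simp) ?_ ?_ x
    · intro w x
      simp only [IL_tm, map_add, sW.I_ε, sW.ε_ε, neg_tm]
      rw [sW.I_I X Y, sA.I_I X Y, neg_tm, tm_neg]; abel
    · intro x y hx hy; simp only [map_add, hx, hy]; abel
  deg_I X x := by
    refine ind sW sA (fun x => dd sW sA (IL sW sA X x) = IL sW sA X (dd sW sA x) - IL sW sA X x)
      (by simp) ?_ ?_ x
    · intro w x
      simp only [IL_tm, dd_tm, map_add, sW.deg_ε, sW.deg_I, sA.deg_I, sub_tm, tm_sub]; abel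
    · intro x y hx hy; simp only [map_add, hx, hy]; abel
  L := LL sW sA
  cartan X x := by
    refine ind sW sA (fun x => IL sW sA X (DD sW sA x) + DD sW sA (IL sW sA X x) = LL sW sA X x)
      (by simp) ?_ ?_ x
    · intro w x
      simp only [IL_tm, DD_tm, LL_tm, map_add, sW.D_ε, sW.I_ε, sW.ε_ε, neg_tm, ← sW.cartan,
        ← sA.cartan, add_tm, tm_add]; abel
    · intro x y hx hy; rw [map_add, map_add, map_add, map_add, map_add, ← hx, ← hy]; abel
  L_I X Y x := by
    refine ind sW sA (fun x => LL sW sA X (IL sW sA Y x) = IL sW sA Y (LL sW sA X x) +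
      IL sW sA ⁅X, Y⁆ x) (by simp) ?_ ?_ x
    · intro w x
      simp only [IL_tm, LL_tm, map_add, sW.L_ε, sW.L_I, sA.L_I, add_tm, tm_add]; abel
    · intro x y hx hy; simp only [map_add, hx, hy]; abel

end Tw
end

open scoped TensorProduct
noncomputable section

/-! ### Structure of the Weil algebra -/

lemma FreeSC.der_zero {ι : Type} [Fintype ι] [LinearOrder ι] {W : Type} [Ring W] [Algebra ℝ W]
    (fs : FreeSC ι W) {T : Type} [Ring T] [Algebra ℝ T] (δ : W →ₗ[ℝ] T) (f g : W → T)
    (hf : f 1 = 1) (hg : g 1 = 1) (hδ : ∀ x y, δ (x * y) = δ x * f y + g x * δ y)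
    (h1 : ∀ i, δ (fs.θ i) = 0) (h2 : ∀ i, δ (fs.Ω i) = 0) (x : W) : δ x = 0 := by
  refine fs.induct (fun x => δ x = 0) ?_ ?_ ?_ ?_ ?_ x
  · intro a b ha hb; rw [map_add, ha, hb, add_zero]
  · intro r a ha; rw [map_smul, ha, smul_zero]
  · have := hδ 1 1
    rw [hf, hg] at this
    simpa using this
  · intro i a ha; rw [hδ, h1, ha]; simp
  · intro i a ha; rw [hδ, h2, ha]; simp

section
variable {ι : Type} [Fintype ι] [DecidableEq ι] [LinearOrder ι]
variable {𝔤 : Type} [LieRing 𝔤] [LieAlgebra ℝ 𝔤]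
variable {W : Type} [Ring W] [Algebra ℝ W]

/-- The linear map `𝔤* → W` with given values on the dual basis. -/
def genL (b : Module.Basis ι ℝ 𝔤) (x : ι → W) : Module.Dual ℝ 𝔤 →ₗ[ℝ] W where
  toFun α := ∑ i, α (b i) • x i
  map_add' α β := by simp [add_smul, Finset.sum_add_distrib]
  map_smul' r α := by simp [mul_smul, Finset.smul_sum]

lemma genL_apply (b : Module.Basis ι ℝ 𝔤) (x : ι → W) (α : Module.Dual ℝ 𝔤) :
    genL b x α = ∑ i, α (b i) • x i := rfl

lemma genL_coord (b : Module.Basis ι ℝ 𝔤) (x : ι → W) (i : ι) : genL b x (b.coord i) = x i := by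
  rw [genL_apply, Finset.sum_eq_single i]
  · simp
  · intro j _ h; simp [Finsupp.single_apply, h]
  · simp

/-- Extensionality over a basis. -/
lemma lin_ext {V : Type} [AddCommGroup V] [Module ℝ V] (b : Module.Basis ι ℝ 𝔤)
    (f g : 𝔤 →ₗ[ℝ] V) (h : ∀ i, f (b i) = g (b i)) (X : 𝔤) : f X = g X :=
  LinearMap.congr_fun (b.ext h) X

lemma coord_sum (b : Module.Basis ι ℝ 𝔤) (α : Module.Dual ℝ 𝔤) (X : 𝔤) :
    α X = ∑ i, b.repr X i * α (b i) := by
  have h := congrArg α (b.sum_repr X)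
  rw [map_sum] at h
  rw [← h]
  simp only [map_smul, smul_eq_mul]

namespace WeilData
variable {b : Module.Basis ι ℝ 𝔤} (wd : WeilData ι b W)

/-- Freeness data. -/
def fsc : FreeSC ι W where
  θ := wd.θ
  Ω := wd.Ω
  anti i k := by
    have := wd.supercomm (wd.θ_mem i) (wd.θ_mem k)
    simpa [sgn] using this
  comm i k := by
    have := wd.supercomm (wd.Ω_mem i) (wd.Ω_mem k)
    rw [this, show sgn (2 * 2) = 1 from if_pos ⟨2, by norm_num⟩, one_smul]
  comm2 i k := by
    have := wd.supercomm (wd.Ω_mem i) (wd.θ_mem k)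
    rw [this]; simp [sgn]
  w := wd.free.choose
  hw := wd.free.choose_spec

lemma fsc_θ : wd.fsc.θ = wd.θ := rfl
lemma fsc_Ω : wd.fsc.Ω = wd.Ω := rfl

/-- The super-operation of the Weil algebra. -/
abbrev sup : SuperOp 𝔤 W := wd.toOperation.toSuper

/-- `θ` as a linear map on the dual. -/
def thL : Module.Dual ℝ 𝔤 →ₗ[ℝ] W := genL b wd.θ
/-- `Ω` as a linear map on the dual. -/
def OmL : Module.Dual ℝ 𝔤 →ₗ[ℝ] W := genL b wd.Ω

lemma thL_coord (i : ι) : wd.thL (b.coord i) = wd.θ i := genL_coord _ _ _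
lemma OmL_coord (i : ι) : wd.OmL (b.coord i) = wd.Ω i := genL_coord _ _ _

lemma thL_mem (α : Module.Dual ℝ 𝔤) : wd.thL α ∈ wd.grading 1 :=
  Submodule.sum_mem _ fun i _ => Submodule.smul_mem _ _ (wd.θ_mem i)
lemma OmL_mem (α : Module.Dual ℝ 𝔤) : wd.OmL α ∈ wd.grading 2 :=
  Submodule.sum_mem _ fun i _ => Submodule.smul_mem _ _ (wd.Ω_mem i)

lemma eps_thL (α : Module.Dual ℝ 𝔤) : wd.eps (wd.thL α) = - wd.thL α := by
  rw [wd.eps_of (wd.thL_mem α)]; simp [sgn]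
lemma eps_OmL (α : Module.Dual ℝ 𝔤) : wd.eps (wd.OmL α) = wd.OmL α := by
  rw [wd.eps_of (wd.OmL_mem α)]; simp [sgn]
lemma dg_thL (α : Module.Dual ℝ 𝔤) : wd.dg (wd.thL α) = wd.thL α := by
  rw [wd.dg_of (wd.thL_mem α)]; simp
lemma dg_OmL (α : Module.Dual ℝ 𝔤) : wd.dg (wd.OmL α) = (2 : ℝ) • wd.OmL α := by
  rw [wd.dg_of (wd.OmL_mem α)]; simp

lemma I_thL (X : 𝔤) (α : Module.Dual ℝ 𝔤) : wd.I X (wd.thL α) = α X • (1 : W) := by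
  refine lin_ext b (wd.I.flip (wd.thL α)) (LinearMap.toSpanSingleton ℝ W 1 ∘ₗ α) ?_ X
  intro i
  change wd.I (b i) (wd.thL α) = α (b i) • (1 : W)
  simp only [thL, genL_apply, map_sum, map_smul, wd.I_θ]
  rw [Finset.sum_eq_single i]
  · simp
  · intro j _ h; simp [h.symm]
  · simp

lemma I_OmL (X : 𝔤) (α : Module.Dual ℝ 𝔤) : wd.I X (wd.OmL α) = 0 := by
  refine lin_ext b (wd.I.flip (wd.OmL α)) 0 ?_ X
  intro i
  simp [OmL, genL_apply, map_sum, map_smul, wd.I_Ω]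

lemma L_gen (x : ι → W) (hx : ∀ i j, wd.L (b i) (x j) = -∑ k, structConst b j i k • x k)
    (Y : 𝔤) (α : Module.Dual ℝ 𝔤) :
    wd.L Y (genL b x α) = - genL b x (α ∘ₗ (LieAlgebra.ad ℝ 𝔤 Y : 𝔤 →ₗ[ℝ] 𝔤)) := by
  have key : ∀ i, wd.L (b i) (genL b x α) =
      - genL b x (α ∘ₗ (LieAlgebra.ad ℝ 𝔤 (b i) : 𝔤 →ₗ[ℝ] 𝔤)) := by
    intro i
    simp only [genL_apply, map_sum, map_smul, hx, LinearMap.comp_apply, LieAlgebra.ad_apply,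
      smul_neg, Finset.sum_neg_distrib, Finset.smul_sum, smul_smul]
    rw [Finset.sum_comm]
    congr 1
    refine Finset.sum_congr rfl fun k _ => ?_
    rw [coord_sum b α ⁅b i, b k⁆, Finset.sum_smul]
    refine Finset.sum_congr rfl fun j _ => ?_
    rw [mul_comm]; rfl
  rw [← b.sum_repr Y]
  simp only [map_sum, map_smul, LinearMap.sum_apply, LinearMap.smul_apply, key]
  simp only [genL_apply, LinearMap.comp_apply, LinearMap.sum_apply, LinearMap.smul_apply,
    map_sum, map_smul, smul_neg, Finset.sum_neg_distrib, Finset.sum_smul, smul_eq_mul,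
    Finset.smul_sum, smul_smul]
  rw [Finset.sum_comm]

lemma L_thL (Y : 𝔤) (α : Module.Dual ℝ 𝔤) :
    wd.L Y (wd.thL α) = - wd.thL (α ∘ₗ (LieAlgebra.ad ℝ 𝔤 Y : 𝔤 →ₗ[ℝ] 𝔤)) :=
  wd.L_gen wd.θ wd.L_θ Y α

lemma L_OmL (Y : 𝔤) (α : Module.Dual ℝ 𝔤) :
    wd.L Y (wd.OmL α) = - wd.OmL (α ∘ₗ (LieAlgebra.ad ℝ 𝔤 Y : 𝔤 →ₗ[ℝ] 𝔤)) :=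
  wd.L_gen wd.Ω wd.L_Ω Y α

lemma sum_struct (α : Module.Dual ℝ 𝔤) (x : ι → ι → W) :
    ∑ i, α (b i) • ∑ j, ∑ k, structConst b i j k • x j k =
      ∑ j, ∑ k, α ⁅b j, b k⁆ • x j k := by
  simp only [Finset.smul_sum, smul_smul]
  rw [Finset.sum_comm]
  refine Finset.sum_congr rfl fun j _ => ?_
  rw [Finset.sum_comm]
  refine Finset.sum_congr rfl fun k _ => ?_
  rw [coord_sum b α ⁅b j, b k⁆, Finset.sum_smul]
  refine Finset.sum_congr rfl fun i _ => ?_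
  rw [mul_comm]; rfl

lemma d_thL (α : Module.Dual ℝ 𝔤) : wd.d (wd.thL α) =
    (-(1/2 : ℝ)) • (∑ j, ∑ k, α ⁅b j, b k⁆ • (wd.θ j * wd.θ k)) + wd.OmL α := by
  rw [← sum_struct]
  simp only [thL, OmL, genL_apply, map_sum, map_smul, wd.d_θ, smul_add, Finset.sum_add_distrib]
  congr 1
  rw [Finset.smul_sum]
  refine Finset.sum_congr rfl fun i _ => ?_
  rw [smul_comm]

lemma d_OmL (α : Module.Dual ℝ 𝔤) : wd.d (wd.OmL α) =
    -(∑ j, ∑ k, α ⁅b j, b k⁆ • (wd.θ j * wd.Ω k)) := by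
  rw [← sum_struct]
  simp only [OmL, genL_apply, map_sum, map_smul, wd.d_Ω, smul_neg, Finset.sum_neg_distrib]

/-- Partial derivatives along `Ω`. -/
def pdf (X : 𝔤) : Module.End ℝ W := (wd.fsc.exists_pd (fun i => b.repr X i)).choose

lemma pdf_mul (X : 𝔤) (x y : W) : wd.pdf X (x * y) = wd.pdf X x * y + x * wd.pdf X y :=
  (wd.fsc.exists_pd (fun i => b.repr X i)).choose_spec.1 x y
lemma pdf_θ (X : 𝔤) (i : ι) : wd.pdf X (wd.θ i) = 0 :=
  (wd.fsc.exists_pd (fun i => b.repr X i)).choose_spec.2.1 i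
lemma pdf_Ω (X : 𝔤) (i : ι) : wd.pdf X (wd.Ω i) = b.repr X i • 1 :=
  (wd.fsc.exists_pd (fun i => b.repr X i)).choose_spec.2.2 i

lemma der_ext (δ δ' : Module.End ℝ W) (h : ∀ x y, δ (x * y) = δ x * y + x * δ y)
    (h' : ∀ x y, δ' (x * y) = δ' x * y + x * δ' y) (h1 : ∀ i, δ (wd.θ i) = δ' (wd.θ i))
    (h2 : ∀ i, δ (wd.Ω i) = δ' (wd.Ω i)) : δ = δ' := by
  ext x
  have := wd.fsc.der_zero (δ - δ') id id rfl rfl (fun x y => by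
    simp only [LinearMap.sub_apply, h, h', id]; noncomm_ring)
    (fun i => by simp [fsc_θ, h1]) (fun i => by simp [fsc_Ω, h2]) x
  simpa [sub_eq_zero] using this

/-- Partial derivatives along `Ω`, linear in the direction. -/
def pd : 𝔤 →ₗ[ℝ] Module.End ℝ W where
  toFun := wd.pdf
  map_add' X Y := by
    apply wd.der_ext
    · exact wd.pdf_mul _
    · intro x y; simp only [LinearMap.add_apply, wd.pdf_mul]; noncomm_ring
    · intro i; simp [wd.pdf_θ]
    · intro i; simp [wd.pdf_Ω, add_smul]
  map_smul' r X := by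
    apply wd.der_ext
    · exact wd.pdf_mul _
    · intro x y
      simp [wd.pdf_mul]
    · intro i; simp [wd.pdf_θ]
    · intro i; simp [wd.pdf_Ω, mul_smul]

lemma pd_mul (X : 𝔤) (x y : W) : wd.pd X (x * y) = wd.pd X x * y + x * wd.pd X y :=
  wd.pdf_mul X x y
lemma pd_one (X : 𝔤) : wd.pd X 1 = 0 := by
  have := wd.pd_mul X 1 1
  simpa using this
lemma pd_thL (X : 𝔤) (α : Module.Dual ℝ 𝔤) : wd.pd X (wd.thL α) = 0 := by
  simp only [thL, genL_apply, map_sum, map_smul]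
  exact Finset.sum_eq_zero fun i _ => by rw [show wd.pd X (wd.θ i) = 0 from wd.pdf_θ X i, smul_zero]
lemma pd_OmL (X : 𝔤) (α : Module.Dual ℝ 𝔤) : wd.pd X (wd.OmL α) = α X • 1 := by
  simp only [OmL, genL_apply, map_sum, map_smul]
  rw [coord_sum b α X, Finset.sum_smul]
  refine Finset.sum_congr rfl fun i _ => ?_
  rw [show wd.pd X (wd.Ω i) = _ from wd.pdf_Ω X i, smul_smul, mul_comm]

/-- Vanishing of twisted derivations. -/
lemma dz {T : Type} [Ring T] [Algebra ℝ T] (δ : W →ₗ[ℝ] T) (f g : W → T)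
    (hf : f 1 = 1) (hg : g 1 = 1) (hδ : ∀ x y, δ (x * y) = δ x * f y + g x * δ y)
    (h1 : ∀ α, δ (wd.thL α) = 0) (h2 : ∀ α, δ (wd.OmL α) = 0) (x : W) : δ x = 0 :=
  wd.fsc.der_zero δ f g hf hg hδ (fun i => by rw [fsc_θ, ← thL_coord]; exact h1 _)
    (fun i => by rw [fsc_Ω, ← OmL_coord]; exact h2 _) x

lemma pd_ε (X : 𝔤) (x : W) : wd.pd X (wd.sup.ε x) = wd.sup.ε (wd.pd X x) := by
  have := wd.dz (wd.pd X ∘ₗ wd.sup.ε - wd.sup.ε ∘ₗ wd.pd X) wd.sup.ε wd.sup.ε wd.sup.ε_one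
    wd.sup.ε_one (fun x y => by
      simp only [LinearMap.sub_apply, LinearMap.comp_apply, wd.sup.ε_mul, wd.pd_mul, map_add]
      noncomm_ring)
    (fun α => by
      have h : wd.sup.ε (wd.thL α) = - wd.thL α := wd.eps_thL α
      simp [h, wd.pd_thL])
    (fun α => by
      have h : wd.sup.ε (wd.OmL α) = wd.OmL α := wd.eps_OmL α
      simp [h, wd.pd_OmL, wd.sup.ε_one]) x
  exact sub_eq_zero.1 this

lemma deg_one : wd.sup.deg 1 = 0 := by
  have := wd.sup.deg_mul 1 1
  simpa using this

lemma deg_pd (X : 𝔤) (x : W) :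
    wd.sup.deg (wd.pd X x) = wd.pd X (wd.sup.deg x) - (2 : ℝ) • wd.pd X x := by
  have := wd.dz (wd.sup.deg ∘ₗ wd.pd X - wd.pd X ∘ₗ wd.sup.deg + (2 : ℝ) • wd.pd X) id id rfl rfl
    (fun x y => by
      simp only [LinearMap.sub_apply, LinearMap.comp_apply, LinearMap.add_apply,
        LinearMap.smul_apply, wd.sup.deg_mul, wd.pd_mul, map_add, id, add_mul, sub_mul, mul_add,
        mul_sub, smul_mul_assoc, mul_smul_comm]
      module)
    (fun α => by
      have h : wd.sup.deg (wd.thL α) = wd.thL α := wd.dg_thL α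
      simp [h, wd.pd_thL])
    (fun α => by
      have h : wd.sup.deg (wd.OmL α) = (2 : ℝ) • wd.OmL α := wd.dg_OmL α
      simp [h, wd.pd_OmL, wd.deg_one]) x
  simp only [LinearMap.sub_apply, LinearMap.comp_apply, LinearMap.add_apply,
    LinearMap.smul_apply] at this
  rw [eq_sub_iff_add_eq, ← sub_eq_zero, ← this]; abel

lemma I_pd (Y X : 𝔤) (x : W) : wd.sup.I Y (wd.pd X x) = wd.pd X (wd.sup.I Y x) := by
  have := wd.dz (wd.sup.I Y ∘ₗ wd.pd X - wd.pd X ∘ₗ wd.sup.I Y) id wd.sup.ε rfl wd.sup.ε_one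
    (fun x y => by
      simp only [LinearMap.sub_apply, LinearMap.comp_apply, wd.sup.I_mul, wd.pd_mul, map_add, id,
        wd.pd_ε]
      noncomm_ring)
    (fun α => by
      have h : wd.sup.I Y (wd.thL α) = _ := wd.I_thL Y α
      simp [h, wd.pd_thL, wd.pd_one])
    (fun α => by
      have h : wd.sup.I Y (wd.OmL α) = _ := wd.I_OmL Y α
      simp [h, wd.pd_OmL, wd.sup.I_one]) x
  exact sub_eq_zero.1 this

lemma L_one (Y : 𝔤) : wd.sup.L Y 1 = 0 := by
  have := wd.sup.L_mul Y 1 1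
  simpa using this

lemma L_pd (Y X : 𝔤) (x : W) :
    wd.sup.L Y (wd.pd X x) = wd.pd X (wd.sup.L Y x) + wd.pd ⁅Y, X⁆ x := by
  have := wd.dz (wd.sup.L Y ∘ₗ wd.pd X - (wd.pd X ∘ₗ wd.sup.L Y + wd.pd ⁅Y, X⁆)) id id rfl rfl
    (fun x y => by
      simp only [LinearMap.sub_apply, LinearMap.comp_apply, LinearMap.add_apply, wd.sup.L_mul,
        wd.pd_mul, map_add, id]
      noncomm_ring)
    (fun α => by
      have h : wd.sup.L Y (wd.thL α) = _ := wd.L_thL Y α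
      simp [h, wd.pd_thL])
    (fun α => by
      have h : wd.sup.L Y (wd.OmL α) = _ := wd.L_OmL Y α
      simp [h, wd.pd_OmL, wd.L_one]) x
  exact sub_eq_zero.1 this

end WeilData
end
end

open scoped TensorProduct
noncomputable section

/-! ### Functoriality of the Weil algebra -/

section
variable {ι : Type} [Fintype ι] [DecidableEq ι] [LinearOrder ι]
variable {𝔤 : Type} [LieRing 𝔤] [LieAlgebra ℝ 𝔤]
variable {W : Type} [Ring W] [Algebra ℝ W]
variable {κ : Type} [Fintype κ] [DecidableEq κ] [LinearOrder κ]
variable {𝔮 : Type} [LieRing 𝔮] [LieAlgebra ℝ 𝔮]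
variable {WQ : Type} [Ring WQ] [Algebra ℝ WQ]
variable {b : Module.Basis ι ℝ 𝔤} {bq : Module.Basis κ ℝ 𝔮}

lemma sum4 {V : Type} [AddCommGroup V] (t : κ → κ → ι → ι → V) :
    ∑ l, ∑ m, ∑ j, ∑ k, t l m j k = ∑ j, ∑ k, ∑ l, ∑ m, t l m j k := by
  calc ∑ l, ∑ m, ∑ j, ∑ k, t l m j k = ∑ l, ∑ j, ∑ m, ∑ k, t l m j k :=
        Finset.sum_congr rfl fun l _ => Finset.sum_comm
    _ = ∑ j, ∑ l, ∑ m, ∑ k, t l m j k := Finset.sum_comm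
    _ = ∑ j, ∑ l, ∑ k, ∑ m, t l m j k :=
        Finset.sum_congr rfl fun j _ => Finset.sum_congr rfl fun l _ => Finset.sum_comm
    _ = ∑ j, ∑ k, ∑ l, ∑ m, t l m j k := Finset.sum_congr rfl fun j _ => Finset.sum_comm

lemma bracket_coord (β : Module.Dual ℝ 𝔮) (u v : 𝔮) :
    β ⁅u, v⁆ = ∑ l, ∑ m, (bq.repr u l * bq.repr v m) * β ⁅bq l, bq m⁆ := by
  have h1 := coord_sum bq (β ∘ₗ (LieAlgebra.ad ℝ 𝔮 u : 𝔮 →ₗ[ℝ] 𝔮)) v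
  simp only [LinearMap.comp_apply, LieAlgebra.ad_apply] at h1
  rw [h1, Finset.sum_comm]
  refine Finset.sum_congr rfl fun m _ => ?_
  have h2 := coord_sum bq (β ∘ₗ (LieAlgebra.ad ℝ 𝔮 (bq m) : 𝔮 →ₗ[ℝ] 𝔮)) u
  simp only [LinearMap.comp_apply, LieAlgebra.ad_apply] at h2
  rw [← lie_skew, map_neg, h2, mul_neg, Finset.mul_sum, ← Finset.sum_neg_distrib]
  refine Finset.sum_congr rfl fun l _ => ?_
  rw [← lie_skew (bq l) (bq m), map_neg]; ring

lemma double_sum (π : 𝔤 →ₗ⁅ℝ⁆ 𝔮) (x y : ι → W) (β : Module.Dual ℝ 𝔮) :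
    ∑ l, ∑ m, β ⁅bq l, bq m⁆ • (genL b x (bq.coord l ∘ₗ (π : 𝔤 →ₗ[ℝ] 𝔮)) *
      genL b y (bq.coord m ∘ₗ (π : 𝔤 →ₗ[ℝ] 𝔮))) =
    ∑ j, ∑ k, (β ∘ₗ (π : 𝔤 →ₗ[ℝ] 𝔮)) ⁅b j, b k⁆ • (x j * y k) := by
  have h : ∀ l m, β ⁅bq l, bq m⁆ • (genL b x (bq.coord l ∘ₗ (π : 𝔤 →ₗ[ℝ] 𝔮)) *
      genL b y (bq.coord m ∘ₗ (π : 𝔤 →ₗ[ℝ] 𝔮))) =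
      ∑ j, ∑ k, ((bq.repr (π (b j)) l * bq.repr (π (b k)) m) * β ⁅bq l, bq m⁆) • (x j * y k) := by
    intro l m
    simp only [genL_apply, Finset.sum_mul, Finset.mul_sum, Finset.smul_sum]
    rw [Finset.sum_comm]
    refine Finset.sum_congr rfl fun j _ => Finset.sum_congr rfl fun k _ => ?_
    rw [smul_mul_smul_comm, smul_smul, mul_comm]; rfl
  simp only [h]
  rw [sum4]
  refine Finset.sum_congr rfl fun j _ => Finset.sum_congr rfl fun k _ => ?_
  have h3 : (β ∘ₗ (π : 𝔤 →ₗ[ℝ] 𝔮)) ⁅b j, b k⁆ = β ⁅π (b j), π (b k)⁆ := by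
    simp
  rw [h3, bracket_coord (bq := bq)]
  simp only [Finset.sum_smul]

variable (wdG : WeilData ι b W) (wdQ : WeilData κ bq WQ)

lemma thL_anti (α β : Module.Dual ℝ 𝔤) :
    wdG.thL α * wdG.thL β = -(wdG.thL β * wdG.thL α) := by
  rw [wdG.sup.comm_odd (wdG.eps_thL α), show wdG.sup.ε (wdG.thL β) = _ from wdG.eps_thL β, neg_mul]

lemma OmL_comm (α : Module.Dual ℝ 𝔤) (x : W) : wdG.OmL α * x = x * wdG.OmL α :=
  wdG.sup.comm_even (wdG.eps_OmL α) x

lemma genL_comp (x : κ → WQ) (pm : WQ →ₐ[ℝ] W) (f : 𝔤 →ₗ[ℝ] 𝔮) (y : Module.Dual ℝ 𝔤 →ₗ[ℝ] W)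
    (h : ∀ k, pm (x k) = y (bq.coord k ∘ₗ f)) (β : Module.Dual ℝ 𝔮) :
    pm (genL bq x β) = y (β ∘ₗ f) := by
  have h3 : β ∘ₗ f = ∑ k, β (bq k) • (bq.coord k ∘ₗ f) := by
    ext X
    rw [LinearMap.comp_apply, coord_sum bq β (f X), LinearMap.sum_apply]
    refine Finset.sum_congr rfl fun k _ => ?_
    rw [mul_comm]; rfl
  rw [genL_apply, map_sum, h3, map_sum]
  refine Finset.sum_congr rfl fun k _ => ?_
  rw [map_smul, h, map_smul]

lemma exists_pm (f : 𝔤 →ₗ[ℝ] 𝔮) : ∃ pm : WQ →ₐ[ℝ] W,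
    (∀ β, pm (wdQ.thL β) = wdG.thL (β ∘ₗ f)) ∧ (∀ β, pm (wdQ.OmL β) = wdG.OmL (β ∘ₗ f)) := by
  obtain ⟨pm, h1, h2⟩ := wdQ.fsc.exists_lift (fun k => wdG.thL (bq.coord k ∘ₗ f))
    (fun k => wdG.OmL (bq.coord k ∘ₗ f)) (fun _ _ => thL_anti wdG _ _)
    (fun _ _ => OmL_comm wdG _ _) (fun _ _ => OmL_comm wdG _ _)
  exact ⟨pm, genL_comp _ pm f _ h1, genL_comp _ pm f _ h2⟩

lemma pm_retract (f : 𝔤 →ₗ[ℝ] 𝔮) (g : 𝔮 →ₗ[ℝ] 𝔤) (hfg : f ∘ₗ g = LinearMap.id)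
    (pm : WQ →ₐ[ℝ] W) (h1 : ∀ β, pm (wdQ.thL β) = wdG.thL (β ∘ₗ f))
    (h2 : ∀ β, pm (wdQ.OmL β) = wdG.OmL (β ∘ₗ f))
    (rm : W →ₐ[ℝ] WQ) (h3 : ∀ β, rm (wdG.thL β) = wdQ.thL (β ∘ₗ g))
    (h4 : ∀ β, rm (wdG.OmL β) = wdQ.OmL (β ∘ₗ g)) (x : WQ) : rm (pm x) = x := by
  have : rm.comp pm = AlgHom.id ℝ WQ := by
    apply wdQ.fsc.hom_ext
    · intro i
      rw [WeilData.fsc_θ, ← wdQ.thL_coord]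
      simp [h1, h3, LinearMap.comp_assoc, hfg]
    · intro i
      rw [WeilData.fsc_Ω, ← wdQ.OmL_coord]
      simp [h2, h4, LinearMap.comp_assoc, hfg]
  exact DFunLike.congr_fun this x

variable (π : 𝔤 →ₗ⁅ℝ⁆ 𝔮) (pm : WQ →ₐ[ℝ] W)
  (h1 : ∀ β, pm (wdQ.thL β) = wdG.thL (β ∘ₗ (π : 𝔤 →ₗ[ℝ] 𝔮)))
  (h2 : ∀ β, pm (wdQ.OmL β) = wdG.OmL (β ∘ₗ (π : 𝔤 →ₗ[ℝ] 𝔮)))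

lemma pm_ε (h1 : ∀ β, pm (wdQ.thL β) = wdG.thL (β ∘ₗ (π : 𝔤 →ₗ[ℝ] 𝔮)))
    (h2 : ∀ β, pm (wdQ.OmL β) = wdG.OmL (β ∘ₗ (π : 𝔤 →ₗ[ℝ] 𝔮))) (x : WQ) :
    pm (wdQ.sup.ε x) = wdG.sup.ε (pm x) := by
  have := wdQ.dz (pm.toLinearMap ∘ₗ wdQ.sup.ε - wdG.sup.ε ∘ₗ pm.toLinearMap)
    (fun x => pm (wdQ.sup.ε x)) (fun x => wdG.sup.ε (pm x)) (by simp [wdQ.sup.ε_one])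
    (by simp [wdG.sup.ε_one])
    (fun x y => by
      simp only [LinearMap.sub_apply, LinearMap.comp_apply, wdQ.sup.ε_mul, map_mul,
        AlgHom.toLinearMap_apply, wdG.sup.ε_mul]
      noncomm_ring)
    (fun α => by
      have h : wdQ.sup.ε (wdQ.thL α) = - wdQ.thL α := wdQ.eps_thL α
      have h' : wdG.sup.ε (wdG.thL (α ∘ₗ (π : 𝔤 →ₗ[ℝ] 𝔮))) = _ := wdG.eps_thL _
      simp [h, h1, h'])
    (fun α => by
      have h : wdQ.sup.ε (wdQ.OmL α) = wdQ.OmL α := wdQ.eps_OmL α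
      have h' : wdG.sup.ε (wdG.OmL (α ∘ₗ (π : 𝔤 →ₗ[ℝ] 𝔮))) = _ := wdG.eps_OmL _
      simp [h, h2, h']) x
  exact sub_eq_zero.1 this

lemma pm_deg (h1 : ∀ β, pm (wdQ.thL β) = wdG.thL (β ∘ₗ (π : 𝔤 →ₗ[ℝ] 𝔮)))
    (h2 : ∀ β, pm (wdQ.OmL β) = wdG.OmL (β ∘ₗ (π : 𝔤 →ₗ[ℝ] 𝔮))) (x : WQ) :
    pm (wdQ.sup.deg x) = wdG.sup.deg (pm x) := by
  have := wdQ.dz (pm.toLinearMap ∘ₗ wdQ.sup.deg - wdG.sup.deg ∘ₗ pm.toLinearMap)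
    pm pm (by simp) (by simp)
    (fun x y => by
      simp only [LinearMap.sub_apply, LinearMap.comp_apply, wdQ.sup.deg_mul, map_mul, map_add,
        AlgHom.toLinearMap_apply, wdG.sup.deg_mul]
      noncomm_ring)
    (fun α => by
      have h : wdQ.sup.deg (wdQ.thL α) = _ := wdQ.dg_thL α
      have h' : wdG.sup.deg (wdG.thL (α ∘ₗ (π : 𝔤 →ₗ[ℝ] 𝔮))) = _ := wdG.dg_thL _
      simp [h, h1, h'])
    (fun α => by
      have h : wdQ.sup.deg (wdQ.OmL α) = _ := wdQ.dg_OmL α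
      have h' : wdG.sup.deg (wdG.OmL (α ∘ₗ (π : 𝔤 →ₗ[ℝ] 𝔮))) = _ := wdG.dg_OmL _
      simp [h, h2, h']) x
  exact sub_eq_zero.1 this

lemma pm_I (h1 : ∀ β, pm (wdQ.thL β) = wdG.thL (β ∘ₗ (π : 𝔤 →ₗ[ℝ] 𝔮)))
    (h2 : ∀ β, pm (wdQ.OmL β) = wdG.OmL (β ∘ₗ (π : 𝔤 →ₗ[ℝ] 𝔮))) (X : 𝔤) (x : WQ) :
    pm (wdQ.sup.I (π X) x) = wdG.sup.I X (pm x) := by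
  have := wdQ.dz (pm.toLinearMap ∘ₗ wdQ.sup.I (π X) - wdG.sup.I X ∘ₗ pm.toLinearMap)
    pm (fun x => wdG.sup.ε (pm x)) (by simp) (by simp [wdG.sup.ε_one])
    (fun x y => by
      simp only [LinearMap.sub_apply, LinearMap.comp_apply, wdQ.sup.I_mul, map_mul, map_add,
        AlgHom.toLinearMap_apply, wdG.sup.I_mul, pm_ε wdG wdQ π pm h1 h2]
      noncomm_ring)
    (fun α => by
      have h : wdQ.sup.I (π X) (wdQ.thL α) = _ := wdQ.I_thL _ α
      have h' : wdG.sup.I X (wdG.thL (α ∘ₗ (π : 𝔤 →ₗ[ℝ] 𝔮))) = _ := wdG.I_thL _ _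
      simp [h, h1, h'])
    (fun α => by
      have h : wdQ.sup.I (π X) (wdQ.OmL α) = _ := wdQ.I_OmL _ α
      have h' : wdG.sup.I X (wdG.OmL (α ∘ₗ (π : 𝔤 →ₗ[ℝ] 𝔮))) = _ := wdG.I_OmL _ _
      simp [h, h2, h']) x
  exact sub_eq_zero.1 this

lemma pm_D (h1 : ∀ β, pm (wdQ.thL β) = wdG.thL (β ∘ₗ (π : 𝔤 →ₗ[ℝ] 𝔮)))
    (h2 : ∀ β, pm (wdQ.OmL β) = wdG.OmL (β ∘ₗ (π : 𝔤 →ₗ[ℝ] 𝔮))) (x : WQ) :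
    pm (wdQ.sup.D x) = wdG.sup.D (pm x) := by
  have h1' : ∀ k, pm (wdQ.θ k) = genL b wdG.θ (bq.coord k ∘ₗ (π : 𝔤 →ₗ[ℝ] 𝔮)) := fun k => by
    rw [← wdQ.thL_coord, h1]; rfl
  have h2' : ∀ k, pm (wdQ.Ω k) = genL b wdG.Ω (bq.coord k ∘ₗ (π : 𝔤 →ₗ[ℝ] 𝔮)) := fun k => by
    rw [← wdQ.OmL_coord, h2]; rfl
  have := wdQ.dz (pm.toLinearMap ∘ₗ wdQ.sup.D - wdG.sup.D ∘ₗ pm.toLinearMap)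
    pm (fun x => wdG.sup.ε (pm x)) (by simp) (by simp [wdG.sup.ε_one])
    (fun x y => by
      simp only [LinearMap.sub_apply, LinearMap.comp_apply, wdQ.sup.D_mul, map_mul, map_add,
        AlgHom.toLinearMap_apply, wdG.sup.D_mul, pm_ε wdG wdQ π pm h1 h2]
      noncomm_ring)
    (fun α => by
      have h : wdQ.sup.D (wdQ.thL α) = _ := wdQ.d_thL α
      have h' : wdG.sup.D (wdG.thL (α ∘ₗ (π : 𝔤 →ₗ[ℝ] 𝔮))) = _ := wdG.d_thL _
      simp only [LinearMap.sub_apply, LinearMap.comp_apply, AlgHom.toLinearMap_apply]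
      rw [h1, h, h', map_add, map_smul, h2, ← double_sum (bq := bq), sub_eq_zero]
      simp only [map_sum, map_smul, map_mul, h1'])
    (fun α => by
      have h : wdQ.sup.D (wdQ.OmL α) = _ := wdQ.d_OmL α
      have h' : wdG.sup.D (wdG.OmL (α ∘ₗ (π : 𝔤 →ₗ[ℝ] 𝔮))) = _ := wdG.d_OmL _
      simp only [LinearMap.sub_apply, LinearMap.comp_apply, AlgHom.toLinearMap_apply]
      rw [h2, h, h', map_neg, ← double_sum (bq := bq), sub_eq_zero]
      simp only [map_sum, map_smul, map_mul, h1', h2']) x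
  exact sub_eq_zero.1 this

lemma pm_L (h1 : ∀ β, pm (wdQ.thL β) = wdG.thL (β ∘ₗ (π : 𝔤 →ₗ[ℝ] 𝔮)))
    (h2 : ∀ β, pm (wdQ.OmL β) = wdG.OmL (β ∘ₗ (π : 𝔤 →ₗ[ℝ] 𝔮))) (X : 𝔤) (x : WQ) :
    pm (wdQ.sup.L (π X) x) = wdG.sup.L X (pm x) := by
  rw [← wdQ.sup.cartan, ← wdG.sup.cartan, map_add, pm_I wdG wdQ π pm h1 h2,
    pm_D wdG wdQ π pm h1 h2, pm_D wdG wdQ π pm h1 h2, pm_I wdG wdQ π pm h1 h2]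

lemma pm_pd (h1 : ∀ β, pm (wdQ.thL β) = wdG.thL (β ∘ₗ (π : 𝔤 →ₗ[ℝ] 𝔮)))
    (h2 : ∀ β, pm (wdQ.OmL β) = wdG.OmL (β ∘ₗ (π : 𝔤 →ₗ[ℝ] 𝔮))) (X : 𝔤) (hX : π X = 0) (x : WQ) :
    wdG.pd X (pm x) = 0 := by
  refine wdQ.dz (wdG.pd X ∘ₗ pm.toLinearMap) pm pm (by simp) (by simp) ?_ ?_ ?_ x
  · intro x y
    simp only [LinearMap.comp_apply, map_mul, AlgHom.toLinearMap_apply, wdG.pd_mul]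
  · intro α
    simp [h1, wdG.pd_thL]
  · intro α
    simp [h2, wdG.pd_OmL, hX]

end
end

open scoped TensorProduct
noncomputable section

/-! ### The homotopy data on the Weil model -/

namespace Tw
section
variable {𝔤 W A : Type} [LieRing 𝔤] [LieAlgebra ℝ 𝔤] [Ring W] [Algebra ℝ W] [Ring A] [Algebra ℝ A]
    (sW : SuperOp 𝔤 W) (sA : SuperOp 𝔤 A)

/-- left inclusion -/
def inL : W →ₗ[ℝ] Tw sW sA where
  toFun w := tm sW sA w 1
  map_add' w v := add_tm sW sA w v 1
  map_smul' r w := smul_tm sW sA r w 1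

/-- right inclusion -/
def inR : A →ₗ[ℝ] Tw sW sA where
  toFun x := tm sW sA 1 x
  map_add' x y := tm_add sW sA 1 x y
  map_smul' r x := tm_smul sW sA r 1 x

lemma tm_one_mul (w v : W) (y : A) : tm sW sA w 1 * tm sW sA v y = tm sW sA (w * v) y := by
  rw [tm_mul, sA.ε_one, one_mul]; module

lemma tm_mul_one (w : W) (x y : A) : tm sW sA w x * tm sW sA 1 y = tm sW sA w (x * y) := by
  rw [tm_mul, sW.ε_one, mul_one]; module

lemma sop_deg_one (s : SuperOp 𝔤 A) : s.deg 1 = 0 := by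
  have := s.deg_mul 1 1
  simpa using this

lemma sop_L_one (s : SuperOp 𝔤 A) (Y : 𝔤) : s.L Y 1 = 0 := by
  have := s.L_mul Y 1 1
  simpa using this

end
end Tw

section
variable {ι : Type} [Fintype ι] [DecidableEq ι] [LinearOrder ι]
variable {𝔤 : Type} [LieRing 𝔤] [LieAlgebra ℝ 𝔤]
variable {A : Type} [Ring A] [Algebra ℝ A]
variable {W : Type} [Ring W] [Algebra ℝ W]
variable {κ : Type} [Fintype κ] [DecidableEq κ] [LinearOrder κ]
variable {𝔮 : Type} [LieRing 𝔮] [LieAlgebra ℝ 𝔮]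
variable {WQ : Type} [Ring WQ] [Algebra ℝ WQ]
variable {b : Module.Basis ι ℝ 𝔤} {bq : Module.Basis κ ℝ 𝔮}

open Tw

/-- Partial derivatives on the tensor product. -/
def pdT (wdG : WeilData ι b W) (sA : SuperOp 𝔤 A) : 𝔤 →ₗ[ℝ] Module.End ℝ (Tw wdG.sup sA) where
  toFun X := mp wdG.sup sA (wdG.pd X) LinearMap.id
  map_add' X Y := by
    rw [map_add]
    exact TensorProduct.map_add_left _ _ _
  map_smul' r X := by
    rw [map_smul]
    exact TensorProduct.map_smul_left _ _ _

lemma pdT_tm (wdG : WeilData ι b W) (sA : SuperOp 𝔤 A) (X : 𝔤) (w : W) (x : A) :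
    pdT wdG sA X (tm wdG.sup sA w x) = tm wdG.sup sA (wdG.pd X w) x := rfl

/-- The subalgebra generated by the image of `W_Q` and `A`. -/
def FF (wdG : WeilData ι b W) (sA : SuperOp 𝔤 A) (pm : WQ →ₐ[ℝ] W) :
    Submodule ℝ (Tw wdG.sup sA) :=
  Submodule.span ℝ {z | ∃ v x, z = tm wdG.sup sA (pm v) x}

lemma FF_tm (wdG : WeilData ι b W) (sA : SuperOp 𝔤 A) (pm : WQ →ₐ[ℝ] W) (v : WQ) (x : A) :
    tm wdG.sup sA (pm v) x ∈ FF wdG sA pm := Submodule.subset_span ⟨v, x, rfl⟩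

lemma FF_ind (wdG : WeilData ι b W) (sA : SuperOp 𝔤 A) (pm : WQ →ₐ[ℝ] W)
    (f : Module.End ℝ (Tw wdG.sup sA)) (N : Submodule ℝ (Tw wdG.sup sA))
    (h : ∀ v x, f (tm wdG.sup sA (pm v) x) ∈ N) (z : Tw wdG.sup sA) (hz : z ∈ FF wdG sA pm) :
    f z ∈ N := by
  have : FF wdG sA pm ≤ N.comap f := by
    refine Submodule.span_le.2 ?_
    rintro _ ⟨v, x, rfl⟩
    exact h v x
  exact this hz

/-- The core data. -/
def mkCore (wdG : WeilData ι b W) (op : Operation 𝔤 A)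
    (𝔫 : Submodule ℝ 𝔤) (hn : ∀ (Y : 𝔤), ∀ x ∈ 𝔫, ⁅Y, x⁆ ∈ 𝔫)
    (π : 𝔤 →ₗ⁅ℝ⁆ 𝔮) (hπsurj : Function.Surjective π)
    (hπker : ∀ X : 𝔤, π X = 0 ↔ X ∈ 𝔫)
    (θN : Module.Dual ℝ ↥𝔫 →ₗ[ℝ] A)
    (hmem : ∀ α, θN α ∈ op.grading 1)
    (hconn : ∀ (X : ↥𝔫) (α : Module.Dual ℝ ↥𝔫),
      op.I (X : 𝔤) (θN α) = α X • (1 : A))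
    (hequiv : ∀ (Y : 𝔤) (α : Module.Dual ℝ ↥𝔫),
      op.L Y (θN α) = -θN (α ∘ₗ adRes 𝔫 hn Y))
    (wdQ : WeilData κ bq WQ) (pm : WQ →ₐ[ℝ] W)
    (h1 : ∀ β, pm (wdQ.thL β) = wdG.thL (β ∘ₗ (π : 𝔤 →ₗ[ℝ] 𝔮)))
    (h2 : ∀ β, pm (wdQ.OmL β) = wdG.OmL (β ∘ₗ (π : 𝔤 →ₗ[ℝ] 𝔮))) :
    Core (sop wdG.sup op.toSuper) 𝔫 hn (π : 𝔤 →ₗ[ℝ] 𝔮) where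
  θ := inL wdG.sup op.toSuper ∘ₗ wdG.thL
  Ω := inL wdG.sup op.toSuper ∘ₗ wdG.OmL
  θ_ε γ := by
    change tm _ _ (wdG.eps (wdG.thL γ)) (op.toSuper.ε 1) = - tm _ _ _ _
    rw [op.toSuper.ε_one, wdG.eps_thL, neg_tm]
  deg_θ γ := by
    change tm _ _ (wdG.dg (wdG.thL γ)) 1 + tm _ _ _ (op.toSuper.deg 1) = tm _ _ _ _
    rw [sop_deg_one, wdG.dg_thL, tm_zero, add_zero]
  I_θ Y γ := by
    change tm _ _ (wdG.I Y (wdG.thL γ)) 1 + tm _ _ _ (op.toSuper.I Y 1) = _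
    rw [op.toSuper.I_one, wdG.I_thL, tm_zero, add_zero, smul_tm]; rfl
  L_θ Y γ := by
    change tm _ _ (wdG.L Y (wdG.thL γ)) 1 + tm _ _ _ (op.toSuper.L Y 1) = - tm _ _ _ _
    rw [sop_L_one, wdG.L_thL, tm_zero, add_zero, neg_tm]
  D_θ γ := by
    change tm _ _ (wdG.d (wdG.thL γ)) 1 + tm _ _ _ (op.toSuper.D 1) - tm _ _ _ _ ∈ _
    rw [op.toSuper.D_one, wdG.d_thL, tm_zero, add_zero, add_tm, add_sub_cancel_right, smul_tm]
    refine Submodule.smul_mem _ _ ?_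
    change inL wdG.sup op.toSuper _ ∈ _
    rw [map_sum]
    refine Submodule.sum_mem _ fun j _ => ?_
    rw [map_sum]
    refine Submodule.sum_mem _ fun k _ => ?_
    rw [map_smul]
    refine Submodule.smul_mem _ _ (Submodule.subset_span ⟨b.coord j, b.coord k, ?_⟩)
    simp only [LinearMap.comp_apply, wdG.thL_coord]
    exact (tm_one_mul _ _ _ _ _).symm
  pd := pdT wdG op.toSuper
  pd_mul X x y := by
    refine ind2 wdG.sup op.toSuper (fun x y => pdT wdG op.toSuper X (x * y) =
      pdT wdG op.toSuper X x * y + x * pdT wdG op.toSuper X y) ?_ ?_ ?_ ?_ ?_ x y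
    · simp
    · simp
    · intro w x v y
      simp only [tm_mul, map_smul, map_add, map_sub, pdT_tm, wdG.pd_mul, wdG.pd_ε, add_tm]
      module
    · intro x x' y h h'
      simp only [add_mul, map_add]; rw [h, h']; module
    · intro x x' y h h'
      simp only [mul_add, map_add]; rw [h, h']; module
  pd_ε X x := by
    refine ind wdG.sup op.toSuper (fun x => pdT wdG op.toSuper X (mp _ _ wdG.sup.ε op.toSuper.ε x) =
      mp _ _ wdG.sup.ε op.toSuper.ε (pdT wdG op.toSuper X x)) (by simp) ?_ ?_ x
    · intro w x; rw [pdT_tm, mp_tm, mp_tm, pdT_tm, wdG.pd_ε]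
    · intro x y hx hy; simp only [map_add, hx, hy]
  pd_θ X γ := by
    change tm _ _ (wdG.pd X (wdG.thL γ)) 1 = 0
    rw [wdG.pd_thL, zero_tm]
  pd_Ω X γ := by
    change tm _ _ (wdG.pd X (wdG.OmL γ)) 1 = _
    rw [wdG.pd_OmL, smul_tm]; rfl
  deg_pd X x := by
    refine ind wdG.sup op.toSuper (fun x => dd _ _ (pdT wdG op.toSuper X x) =
      pdT wdG op.toSuper X (dd _ _ x) - (2 : ℝ) • pdT wdG op.toSuper X x) (by simp) ?_ ?_ x
    · intro w x
      rw [pdT_tm, dd_tm, dd_tm, map_add, pdT_tm, pdT_tm, wdG.deg_pd, sub_tm, smul_tm]; abel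
    · intro x y hx hy; simp only [map_add, hx, hy]; module
  I_pd Y X x := by
    refine ind wdG.sup op.toSuper (fun x => IL _ _ Y (pdT wdG op.toSuper X x) =
      pdT wdG op.toSuper X (IL _ _ Y x)) (by simp) ?_ ?_ x
    · intro w x
      rw [pdT_tm, IL_tm, IL_tm, map_add, pdT_tm, pdT_tm, wdG.I_pd, wdG.pd_ε]
    · intro x y hx hy; simp only [map_add, hx, hy]
  L_pd Y X x := by
    refine ind wdG.sup op.toSuper (fun x => LL _ _ Y (pdT wdG op.toSuper X x) =
      pdT wdG op.toSuper X (LL _ _ Y x) + pdT wdG op.toSuper ⁅Y, X⁆ x) (by simp) ?_ ?_ x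
    · intro w x
      rw [pdT_tm, LL_tm, LL_tm, map_add, pdT_tm, pdT_tm, pdT_tm, wdG.L_pd, add_tm]; abel
    · intro x y hx hy; simp only [map_add, hx, hy]; abel
  τ := inR wdG.sup op.toSuper ∘ₗ θN
  τ_ε α := by
    change tm _ _ (wdG.sup.ε 1) (op.eps (θN α)) = - tm _ _ _ _
    rw [wdG.sup.ε_one, op.eps_of (hmem α), ← tm_neg]; simp [sgn]
  deg_τ α := by
    change tm _ _ (wdG.sup.deg 1) (θN α) + tm _ _ 1 (op.dg (θN α)) = tm _ _ _ _
    rw [wdG.deg_one, op.dg_of (hmem α), zero_tm, zero_add]; simp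
  I_τ X α := by
    change tm _ _ (wdG.sup.I X 1) (θN α) + tm _ _ (wdG.sup.ε 1) (op.I X (θN α)) = _
    rw [wdG.sup.I_one, hconn, zero_tm, zero_add, wdG.sup.ε_one, tm_smul]; rfl
  L_τ Y α := by
    change tm _ _ (wdG.sup.L Y 1) (θN α) + tm _ _ 1 (op.L Y (θN α)) = - tm _ _ _ _
    rw [wdG.L_one, hequiv, zero_tm, zero_add, tm_neg]
  F := FF wdG op.toSuper pm
  F_one := by
    have := FF_tm wdG op.toSuper pm 1 1
    rwa [map_one] at this
  F_mul x y hx hy := by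
    refine FF_ind wdG op.toSuper pm (LinearMap.mulRight ℝ y) _ ?_ x hx
    intro v a
    refine FF_ind wdG op.toSuper pm (LinearMap.mulLeft ℝ (tm _ _ (pm v) a)) _ ?_ y hy
    intro v' a'
    rw [LinearMap.mulLeft_apply, tm_mul, ← pm_ε wdG wdQ π pm h1 h2, ← map_mul, ← map_mul]
    refine Submodule.smul_mem _ _ (Submodule.sub_mem _ (Submodule.add_mem _ (Submodule.add_mem _
      ?_ ?_) ?_) ?_) <;> exact FF_tm _ _ _ _ _
  F_D x hx := by
    refine FF_ind wdG op.toSuper pm (DD _ _) _ ?_ x hx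
    intro v a
    rw [DD_tm, ← pm_ε wdG wdQ π pm h1 h2, ← pm_D wdG wdQ π pm h1 h2]
    exact Submodule.add_mem _ (FF_tm _ _ _ _ _) (FF_tm _ _ _ _ _)
  F_I Y x hx := by
    refine FF_ind wdG op.toSuper pm (IL _ _ Y) _ ?_ x hx
    intro v a
    rw [IL_tm, ← pm_ε wdG wdQ π pm h1 h2, ← pm_I wdG wdQ π pm h1 h2]
    exact Submodule.add_mem _ (FF_tm _ _ _ _ _) (FF_tm _ _ _ _ _)
  F_ε x hx := by
    refine FF_ind wdG op.toSuper pm (mp _ _ wdG.sup.ε op.toSuper.ε) _ ?_ x hx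
    intro v a
    rw [mp_tm, ← pm_ε wdG wdQ π pm h1 h2]
    exact FF_tm _ _ _ _ _
  F_pd X x hx := by
    have := FF_ind wdG op.toSuper pm (pdT wdG op.toSuper X) ⊥ (fun v a => by
      rw [pdT_tm, pm_pd wdG wdQ π pm h1 h2 X ((hπker _).2 X.2), zero_tm]
      exact Submodule.zero_mem _) x hx
    simpa using this
  F_θ β := by
    change tm _ _ (wdG.thL _) 1 ∈ _
    rw [← h1]; exact FF_tm _ _ _ _ _
  F_Ω β := by
    change tm _ _ (wdG.OmL _) 1 ∈ _
    rw [← h2]; exact FF_tm _ _ _ _ _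
  F_τ α := by
    have := FF_tm wdG op.toSuper pm 1 (θN α)
    rw [map_one] at this
    exact this
  gen R hF hθ hΩ hmul := by
    have hone : ∀ x, tm wdG.sup op.toSuper 1 x ∈ R := fun x => by
      have := FF_tm wdG op.toSuper pm 1 x
      rw [map_one] at this
      exact hF this
    have hl : ∀ w, tm wdG.sup op.toSuper w 1 ∈ R := by
      intro w
      refine wdG.fsc.induct (fun w => tm wdG.sup op.toSuper w 1 ∈ R) ?_ ?_ ?_ ?_ ?_ w
      · intro x y hx hy; rw [add_tm]; exact R.add_mem hx hy
      · intro r x hx; rw [smul_tm]; exact R.smul_mem _ hx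
      · exact hone 1
      · intro i x hx
        rw [← tm_one_mul]
        refine hmul _ _ ?_ hx
        have := hθ (b.coord i)
        rw [LinearMap.comp_apply, wdG.thL_coord] at this
        exact this
      · intro i x hx
        rw [← tm_one_mul]
        refine hmul _ _ ?_ hx
        have := hΩ (b.coord i)
        rw [LinearMap.comp_apply, wdG.OmL_coord] at this
        exact this
    rw [eq_top_iff]
    intro z _
    refine ind wdG.sup op.toSuper (fun z => z ∈ R) R.zero_mem ?_ (fun x y => R.add_mem) z
    intro w x
    have := hmul _ _ (hl w) (hone x)
    rwa [tm_mul_one, one_mul] at this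

end
end

open scoped TensorProduct
noncomputable section

/-! ### The comparison of cohomologies -/

theorem coh_equiv {C C' : Type} [AddCommGroup C] [Module ℝ C] [AddCommGroup C'] [Module ℝ C']
    (D : Module.End ℝ C) (D' : Module.End ℝ C') (P : ℤ → Submodule ℝ C)
    (P' : ℤ → Submodule ℝ C') (φ : C' →ₗ[ℝ] C) (K : Module.End ℝ C)
    (hD : ∀ x, D (D x) = 0)
    (hφ : Function.Injective φ) (hDφ : ∀ y, D (φ y) = φ (D' y))
    (hP' : ∀ n y, y ∈ P' n ↔ φ y ∈ P n)
    (hDP : ∀ n x, x ∈ P n → D x ∈ P (n + 1))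
    (hKP : ∀ n x, x ∈ P n → K x ∈ P (n - 1))
    (hKφ : ∀ y, K (φ y) = 0)
    (hT : ∀ n x, x ∈ P n → ∃ k y, Tk (D ∘ₗ K + K ∘ₗ D) k x = φ y) (n : ℤ) :
    Nonempty (gradedCoh D P n ≃ₗ[ℝ] gradedCoh D' P' n) := by
  set M : Module.End ℝ C := D ∘ₗ K + K ∘ₗ D with hM
  have hMa : ∀ x, M x = D (K x) + K (D x) := fun x => rfl
  have hMP : ∀ n x, x ∈ P n → M x ∈ P n := by
    intro n x hx
    rw [hMa]
    refine (P n).add_mem ?_ ?_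
    · have := hDP _ _ (hKP _ _ hx); rwa [sub_add_cancel] at this
    · have := hKP _ _ (hDP _ _ hx); rwa [add_sub_cancel_right] at this
  have hTs : ∀ k x, Tk M (k+1) x = Tk M k (x + ((k+1 : ℝ)⁻¹) • M x) := fun k x => rfl
  have hTP : ∀ k n x, x ∈ P n → Tk M k x ∈ P n := by
    intro k
    induction k with
    | zero => intro n x hx; exact hx
    | succ k ih =>
      intro n x hx
      rw [hTs]
      exact ih _ _ ((P n).add_mem hx ((P n).smul_mem _ (hMP _ _ hx)))
  have hMφ : ∀ y, M (φ y) = 0 := by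
    intro y; rw [hMa, hKφ, hDφ, hKφ, map_zero, add_zero]
  have hTφ : ∀ k y, Tk M k (φ y) = φ y := by
    intro k
    induction k with
    | zero => intro y; rfl
    | succ k ih => intro y; rw [hTs, hMφ, smul_zero, add_zero, ih]
  have hMD : ∀ x, M (D x) = D (M x) := by
    intro x; rw [hMa, hMa, map_add, hD, hD, map_zero, add_zero, zero_add]
  have hTD : ∀ k x, Tk M k (D x) = D (Tk M k x) := by
    intro k
    induction k with
    | zero => intro x; rfl
    | succ k ih => intro x; rw [hTs, hTs, hMD, ← ih, map_add D, map_smul D]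
  have hhom : ∀ k x, x ∈ P n → D x = 0 → ∃ z ∈ P (n - 1), x - Tk M k x = D z := by
    intro k
    induction k with
    | zero => intro x _ _; exact ⟨0, Submodule.zero_mem _, by rw [map_zero]; exact sub_self x⟩
    | succ k ih =>
      intro x hx hdx
      obtain ⟨z, hz, hz'⟩ := ih (x + ((k+1 : ℝ)⁻¹) • M x)
        ((P n).add_mem hx ((P n).smul_mem _ (hMP _ _ hx)))
        (by rw [map_add, map_smul, ← hMD, hdx, map_zero, smul_zero, add_zero])
      refine ⟨z - ((k+1 : ℝ)⁻¹) • K x, (P (n-1)).sub_mem hz ((P (n-1)).smul_mem _ (hKP _ _ hx)), ?_⟩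
      rw [hTs, map_sub, ← hz', map_smul]
      have : M x = D (K x) := by rw [hMa, hdx, map_zero, add_zero]
      rw [← this]; abel
  have hc : ∀ y ∈ cocycles D' P' n, φ y ∈ cocycles D P n := by
    rintro y ⟨h1, h2⟩
    refine ⟨(hP' _ _).1 h1, ?_⟩
    have h2 : D' y = 0 := h2
    change D (φ y) = 0
    rw [hDφ, h2, map_zero]
  let f : cocycles D' P' n →ₗ[ℝ] cocycles D P n := φ.restrict hc
  have hf : Submodule.comap (cocycles D' P' n).subtype (Submodule.map D' (P' (n - 1))) ≤
      (Submodule.comap (cocycles D P n).subtype (Submodule.map D (P (n - 1)))).comap f := by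
    rintro ⟨y, hy⟩ ⟨z, hz, hzy⟩
    refine ⟨φ z, (hP' _ _).1 hz, ?_⟩
    rw [hDφ, hzy]; rfl
  refine ⟨(LinearEquiv.ofBijective (Submodule.mapQ _ _ f hf) ⟨?_, ?_⟩).symm⟩
  · rw [injective_iff_map_eq_zero]
    intro q
    obtain ⟨⟨y, hy⟩, rfl⟩ := Submodule.Quotient.mk_surjective _ q
    intro h
    rw [Submodule.mapQ_apply, Submodule.Quotient.mk_eq_zero] at h
    obtain ⟨z, hz, hzy⟩ := h
    have hzy : D z = φ y := hzy
    obtain ⟨k, u, hu⟩ := hT _ z hz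
    rw [Submodule.Quotient.mk_eq_zero]
    refine ⟨u, (hP' _ _).2 ?_, ?_⟩
    · rw [← hu]; exact hTP _ _ _ hz
    · apply hφ
      rw [← hDφ, ← hu, ← hTD, hzy, hTφ]; rfl
  · intro q
    obtain ⟨⟨x, hx⟩, rfl⟩ := Submodule.Quotient.mk_surjective _ q
    obtain ⟨k, u, hu⟩ := hT _ x hx.1
    obtain ⟨z, hz, hxz⟩ := hhom k x hx.1 hx.2
    have hu1 : u ∈ P' n := by rw [hP', ← hu]; exact hTP _ _ _ hx.1
    have hu2 : D' u = 0 := by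
      apply hφ
      have hdx : D x = 0 := hx.2
      rw [← hDφ, ← hu, ← hTD, hdx, map_zero, map_zero]
    refine ⟨Submodule.Quotient.mk ⟨u, hu1, hu2⟩, ?_⟩
    rw [Submodule.mapQ_apply, Submodule.Quotient.eq]
    refine ⟨-z, (P (n-1)).neg_mem hz, ?_⟩
    rw [map_neg, ← hxz, hu]
    change -(x - φ u) = φ u - x
    abel

section
variable {ι : Type} [Fintype ι] [DecidableEq ι] [LinearOrder ι]
variable {𝔤 : Type} [LieRing 𝔤] [LieAlgebra ℝ 𝔤]
variable {A : Type} [Ring A] [Algebra ℝ A]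
variable {W : Type} [Ring W] [Algebra ℝ W]
variable {κ : Type} [Fintype κ] [DecidableEq κ] [LinearOrder κ]
variable {𝔮 : Type} [LieRing 𝔮] [LieAlgebra ℝ 𝔮]
variable {WQ : Type} [Ring WQ] [Algebra ℝ WQ]
variable {b : Module.Basis ι ℝ 𝔤} {bq : Module.Basis κ ℝ 𝔮}

open Tw

lemma grTensor_top (wd : WeilData ι b W) (op : Operation 𝔤 A) :
    ⨆ n, grTensor b wd op n = ⊤ := by
  rw [eq_top_iff]
  intro z _
  induction z using TensorProduct.induction_on with
  | zero => exact Submodule.zero_mem _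
  | add x y hx hy => exact Submodule.add_mem _ (hx trivial) (hy trivial)
  | tmul w a =>
    refine wd.hind (fun w => w ⊗ₜ[ℝ] a ∈ ⨆ n, grTensor b wd op n) ?_ ?_ w
    · intro p w hw
      refine op.hind (fun a => w ⊗ₜ[ℝ] a ∈ ⨆ n, grTensor b wd op n) ?_ ?_ a
      · intro q a ha
        refine Submodule.mem_iSup_of_mem (p + q) (Submodule.mem_iSup_of_mem p ?_)
        refine ⟨⟨w, hw⟩ ⊗ₜ ⟨a, ?_⟩, rfl⟩
        rwa [add_sub_cancel_left]
      · intro x y hx hy; rw [TensorProduct.tmul_add]; exact Submodule.add_mem _ hx hy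
    · intro x y hx hy; rw [TensorProduct.add_tmul]; exact Submodule.add_mem _ hx hy

lemma grTensor_iff (wd : WeilData ι b W) (op : Operation 𝔤 A) (n : ℤ) (z : W ⊗[ℝ] A) :
    z ∈ grTensor b wd op n ↔ dd wd.sup op.toSuper z = (n : ℝ) • (z : Tw wd.sup op.toSuper) := by
  let T : Module.End ℝ (W ⊗[ℝ] A) := dd wd.sup op.toSuper
  refine eigen_eq (C := W ⊗[ℝ] A) T (grTensor b wd op) ?_ ?_ n z
  · intro n x hx
    have : grTensor b wd op n ≤
        LinearMap.ker (T - (n : ℝ) • (LinearMap.id : Module.End ℝ (W ⊗[ℝ] A))) := by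
      refine iSup_le fun p => ?_
      rintro _ ⟨y, rfl⟩
      induction y using TensorProduct.induction_on with
      | zero => simp
      | add x y hx hy => rw [map_add]; exact Submodule.add_mem _ hx hy
      | tmul w a =>
        rw [LinearMap.mem_ker]
        change dd wd.sup op.toSuper (tm _ _ (w : W) (a : A)) - (n : ℝ) • tm wd.sup op.toSuper (w : W) (a : A) = 0
        rw [dd_tm]
        change tm _ _ (wd.dg (w : W)) _ + tm _ _ _ (op.dg (a : A)) - _ = 0
        rw [wd.dg_of w.2, op.dg_of a.2, tm_smul, smul_tm, ← add_smul, ← sub_smul]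
        push_cast
        rw [show (p : ℝ) + (n - p) - n = 0 by ring, zero_smul]
    have := this hx
    rw [LinearMap.mem_ker] at this
    exact sub_eq_zero.1 this
  · exact grTensor_top wd op

lemma DTot_eq (wd : WeilData ι b W) (op : Operation 𝔤 A) :
    DTot wd op wd.eps = DD wd.sup op.toSuper := rfl
lemma LTot_eq (wd : WeilData ι b W) (op : Operation 𝔤 A) (X : 𝔤) :
    LTot wd op X = LL wd.sup op.toSuper X := rfl
lemma ITot_eq (wd : WeilData ι b W) (op : Operation 𝔤 A) (X : 𝔤) :
    ITot wd op wd.eps X = IL wd.sup op.toSuper X := rfl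

/-- Over a field, a tensor killed by a family of operators in the second factor comes from
the common kernel. -/
lemma tensor_kernel {U A B : Type} [AddCommGroup U] [Module ℝ U] [AddCommGroup A] [Module ℝ A]
    [AddCommGroup B] [Module ℝ B] (ψ : B →ₗ[ℝ] A) (S : Set (Module.End ℝ A))
    (hS : ∀ a : A, (∀ f ∈ S, f a = 0) → a ∈ LinearMap.range ψ) (y : U ⊗[ℝ] A)
    (hy : ∀ f ∈ S, TensorProduct.map (LinearMap.id : Module.End ℝ U) f y = 0) :
    ∃ u : U ⊗[ℝ] B, y = TensorProduct.map LinearMap.id ψ u := by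
  classical
  let bU := Module.Basis.ofVectorSpace ℝ U
  have hnat : ∀ (f : Module.End ℝ A) (i) (y : U ⊗[ℝ] A),
      TensorProduct.equivFinsuppOfBasisLeft bU (TensorProduct.map LinearMap.id f y) i =
      f (TensorProduct.equivFinsuppOfBasisLeft bU y i) := by
    intro f i y
    induction y using TensorProduct.induction_on with
    | zero => simp
    | add x y hx hy => simp only [map_add, Finsupp.add_apply, hx, hy]
    | tmul w a => simp
  have hr : ∀ i, TensorProduct.equivFinsuppOfBasisLeft bU y i ∈ LinearMap.range ψ := by
    intro i
    apply hS
    intro f hf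
    rw [← hnat, hy f hf]; simp
  choose g hg using hr
  have hsum : y = (TensorProduct.equivFinsuppOfBasisLeft bU y).sum fun i a => bU i ⊗ₜ[ℝ] a := by
    conv_lhs => rw [← (TensorProduct.equivFinsuppOfBasisLeft bU).symm_apply_apply y]
    rw [TensorProduct.equivFinsuppOfBasisLeft_symm_apply]
  refine ⟨∑ i ∈ (TensorProduct.equivFinsuppOfBasisLeft bU y).support, bU i ⊗ₜ[ℝ] g i, ?_⟩
  rw [map_sum]
  simp only [TensorProduct.map_tmul, LinearMap.id_apply, hg]
  exact hsum

end
end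

open scoped TensorProduct
noncomputable section

section
variable {ι : Type} [Fintype ι] [DecidableEq ι] [LinearOrder ι]
variable {𝔤 : Type} [LieRing 𝔤] [LieAlgebra ℝ 𝔤]
variable {A : Type} [Ring A] [Algebra ℝ A]
variable {W : Type} [Ring W] [Algebra ℝ W]
variable {κ : Type} [Fintype κ] [DecidableEq κ] [LinearOrder κ]
variable {𝔮 : Type} [LieRing 𝔮] [LieAlgebra ℝ 𝔮]
variable {B : Type} [Ring B] [Algebra ℝ B]
variable {WQ : Type} [Ring WQ] [Algebra ℝ WQ]
variable {b : Module.Basis ι ℝ 𝔤} {bq : Module.Basis κ ℝ 𝔮}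

open Tw

lemma map_inj_of_left {U V A B : Type} [AddCommGroup U] [Module ℝ U] [AddCommGroup V] [Module ℝ V]
    [AddCommGroup A] [Module ℝ A] [AddCommGroup B] [Module ℝ B]
    (f : U →ₗ[ℝ] V) (g : V →ₗ[ℝ] U) (h : ∀ x, g (f x) = x)
    (ψ : B →ₗ[ℝ] A) (hψ : Function.Injective ψ) :
    Function.Injective (TensorProduct.map f ψ) := by
  obtain ⟨ρ, hρ⟩ := LinearMap.exists_leftInverse_of_injective ψ (LinearMap.ker_eq_bot.2 hψ)
  have hgf : g ∘ₗ f = LinearMap.id := LinearMap.ext h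
  refine Function.LeftInverse.injective (g := TensorProduct.map g ρ) fun x => ?_
  rw [← LinearMap.comp_apply, ← TensorProduct.map_comp, hgf, hρ, TensorProduct.map_id]; rfl

/-- The comparison map. -/
def twCmp (wdG : WeilData ι b W) (wdQ : WeilData κ bq WQ) (op : Operation 𝔤 A) (opQ : Operation 𝔮 B)
    (pm : WQ →ₐ[ℝ] W) (ψ : B →ₐ[ℝ] A) : Tw wdQ.sup opQ.toSuper →ₗ[ℝ] Tw wdG.sup op.toSuper :=
  (TensorProduct.map pm.toLinearMap ψ.toLinearMap : WQ ⊗[ℝ] B →ₗ[ℝ] W ⊗[ℝ] A)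

lemma twCmp_tm (wdG : WeilData ι b W) (wdQ : WeilData κ bq WQ) (op : Operation 𝔤 A)
    (opQ : Operation 𝔮 B) (pm : WQ →ₐ[ℝ] W) (ψ : B →ₐ[ℝ] A) (v : WQ) (x : B) :
    twCmp wdG wdQ op opQ pm ψ (tm wdQ.sup opQ.toSuper v x) =
      tm wdG.sup op.toSuper (pm v) (ψ x) := rfl

/-- Auxiliary map. -/
def twCmpA (wdG : WeilData ι b W) (op : Operation 𝔤 A) (pm : WQ →ₐ[ℝ] W) :
    WQ ⊗[ℝ] A →ₗ[ℝ] Tw wdG.sup op.toSuper :=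
  (TensorProduct.map pm.toLinearMap LinearMap.id : WQ ⊗[ℝ] A →ₗ[ℝ] W ⊗[ℝ] A)

lemma twCmpA_tm (wdG : WeilData ι b W) (op : Operation 𝔤 A) (pm : WQ →ₐ[ℝ] W) (v : WQ) (x : A) :
    twCmpA wdG op pm (v ⊗ₜ x) = tm wdG.sup op.toSuper (pm v) x := rfl

lemma FF_range (wdG : WeilData ι b W) (wdQ : WeilData κ bq WQ) (op : Operation 𝔤 A)
    (opQ : Operation 𝔮 B)
    (𝔫 : Submodule ℝ 𝔤) (π : 𝔤 →ₗ⁅ℝ⁆ 𝔮) (hπker : ∀ X : 𝔤, π X = 0 ↔ X ∈ 𝔫)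
    (pm : WQ →ₐ[ℝ] W)
    (h1 : ∀ β, pm (wdQ.thL β) = wdG.thL (β ∘ₗ (π : 𝔤 →ₗ[ℝ] 𝔮)))
    (h2 : ∀ β, pm (wdQ.OmL β) = wdG.OmL (β ∘ₗ (π : 𝔤 →ₗ[ℝ] 𝔮)))
    (rm : W →ₐ[ℝ] WQ) (hrm : ∀ x, rm (pm x) = x) (ψ : B →ₐ[ℝ] A)
    (hψrange : LinearMap.range ψ.toLinearMap =
      (⨅ X : ↥𝔫, LinearMap.ker (op.L (X : 𝔤))) ⊓
        (⨅ X : ↥𝔫, LinearMap.ker (op.I (X : 𝔤))))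
    (z : Tw wdG.sup op.toSuper) (hz : z ∈ FF wdG op.toSuper pm)
    (hI : ∀ X ∈ 𝔫, IL wdG.sup op.toSuper X z = 0) (hL : ∀ X ∈ 𝔫, LL wdG.sup op.toSuper X z = 0) :
    ∃ u, z = twCmp wdG wdQ op opQ pm ψ u := by
  have hFF : FF wdG op.toSuper pm ≤ LinearMap.range (twCmpA wdG op pm) := by
    refine Submodule.span_le.2 ?_
    rintro _ ⟨v, x, rfl⟩
    exact ⟨v ⊗ₜ x, rfl⟩
  have hinj : Function.Injective (twCmpA wdG op pm) :=
    map_inj_of_left pm.toLinearMap rm.toLinearMap hrm LinearMap.id Function.injective_id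
  obtain ⟨y, rfl⟩ := hFF hz
  have hIy : ∀ X ∈ 𝔫, ∀ y : WQ ⊗[ℝ] A, IL wdG.sup op.toSuper X (twCmpA wdG op pm y) =
      twCmpA wdG op pm (TensorProduct.map wdQ.sup.ε (op.I X) y) := by
    intro X hX y
    induction y using TensorProduct.induction_on with
    | zero => simp
    | add x y hx hy => simp only [map_add, hx, hy]
    | tmul v a =>
      rw [twCmpA_tm, IL_tm, ← pm_I wdG wdQ π pm h1 h2, (hπker X).2 hX, map_zero,
        LinearMap.zero_apply, map_zero, zero_tm, zero_add, TensorProduct.map_tmul, twCmpA_tm,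
        pm_ε wdG wdQ π pm h1 h2]
      rfl
  have hLy : ∀ X ∈ 𝔫, ∀ y : WQ ⊗[ℝ] A, LL wdG.sup op.toSuper X (twCmpA wdG op pm y) =
      twCmpA wdG op pm (TensorProduct.map LinearMap.id (op.L X) y) := by
    intro X hX y
    induction y using TensorProduct.induction_on with
    | zero => simp
    | add x y hx hy => simp only [map_add, hx, hy]
    | tmul v a =>
      rw [twCmpA_tm, LL_tm, ← pm_L wdG wdQ π pm h1 h2, (hπker X).2 hX, map_zero,
        LinearMap.zero_apply, map_zero, zero_tm, zero_add, TensorProduct.map_tmul, twCmpA_tm]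
      rfl
  have hεε : wdQ.sup.ε ∘ₗ wdQ.sup.ε = LinearMap.id := LinearMap.ext wdQ.sup.ε_ε
  obtain ⟨u, hu⟩ := tensor_kernel ψ.toLinearMap
    ({f | ∃ X ∈ 𝔫, f = op.I X} ∪ {f | ∃ X ∈ 𝔫, f = op.L X}) (by
      intro a ha
      rw [hψrange]
      simp only [Submodule.mem_inf, Submodule.mem_iInf, LinearMap.mem_ker]
      exact ⟨fun X => ha _ (Or.inr ⟨X, X.2, rfl⟩), fun X => ha _ (Or.inl ⟨X, X.2, rfl⟩)⟩) y (by
      rintro f (⟨X, hX, rfl⟩ | ⟨X, hX, rfl⟩)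
      · have h := hI X hX
        rw [hIy X hX] at h
        have h0 := hinj (h.trans (map_zero _).symm)
        have h3 := congrArg (TensorProduct.map wdQ.sup.ε (LinearMap.id : Module.End ℝ A)) h0
        rw [← LinearMap.comp_apply, ← TensorProduct.map_comp, hεε, LinearMap.id_comp, map_zero] at h3
        exact h3
      · have h := hL X hX
        rw [hLy X hX] at h
        exact hinj (h.trans (map_zero _).symm))
  refine ⟨u, ?_⟩
  rw [hu]
  clear hu hI hL hz
  induction u using TensorProduct.induction_on with
  | zero =>
    rw [map_zero, map_zero]
    exact (map_zero (twCmp wdG wdQ op opQ pm ψ)).symm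
  | add x y hx hy =>
    rw [map_add, map_add, hx, hy]
    exact (map_add (twCmp wdG wdQ op opQ pm ψ) _ _).symm
  | tmul v x => rfl

lemma bas_iff (wd : WeilData ι b W) (op : Operation 𝔤 A) (m : ℤ) (z : W ⊗[ℝ] A) :
    z ∈ ((⨅ X : 𝔤, LinearMap.ker (LTot wd op X)) ⊓
            (⨅ X : 𝔤, LinearMap.ker (ITot wd op wd.eps X))) ⊓ grTensor b wd op m ↔
      (∀ X, LL wd.sup op.toSuper X z = 0) ∧
      (∀ X, IL wd.sup op.toSuper X z = 0) ∧
        dd wd.sup op.toSuper z = (m : ℝ) • (z : Tw wd.sup op.toSuper) := by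
  have h := grTensor_iff wd op m z
  rw [Submodule.mem_inf, Submodule.mem_inf, Submodule.mem_iInf, Submodule.mem_iInf, and_assoc]
  exact and_congr Iff.rfl (and_congr Iff.rfl h)

theorem main_thm
    (b : Module.Basis ι ℝ 𝔤) (op : Operation 𝔤 A)
    (𝔫 : Submodule ℝ 𝔤) (hn : ∀ (Y : 𝔤), ∀ x ∈ 𝔫, ⁅Y, x⁆ ∈ 𝔫)
    (π : 𝔤 →ₗ⁅ℝ⁆ 𝔮) (hπsurj : Function.Surjective π)
    (hπker : ∀ X : 𝔤, π X = 0 ↔ X ∈ 𝔫)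
    (bq : Module.Basis κ ℝ 𝔮)
    (θN : Module.Dual ℝ ↥𝔫 →ₗ[ℝ] A)
    (hmem : ∀ α, θN α ∈ op.grading 1)
    (hconn : ∀ (X : ↥𝔫) (α : Module.Dual ℝ ↥𝔫),
      op.I (X : 𝔤) (θN α) = α X • (1 : A))
    (hequiv : ∀ (Y : 𝔤) (α : Module.Dual ℝ ↥𝔫),
      op.L Y (θN α) = -θN (α ∘ₗ adRes 𝔫 hn Y))
    (opQ : Operation 𝔮 B) (ψ : B →ₐ[ℝ] A)
    (hψinj : Function.Injective ψ)
    (hψrange : LinearMap.range ψ.toLinearMap =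
      (⨅ X : ↥𝔫, LinearMap.ker (op.L (X : 𝔤))) ⊓
        (⨅ X : ↥𝔫, LinearMap.ker (op.I (X : 𝔤))))
    (hψd : ∀ x : B, ψ (opQ.d x) = op.d (ψ x))
    (hψL : ∀ (Y : 𝔤) (x : B), ψ (opQ.L (π Y) x) = op.L Y (ψ x))
    (hψI : ∀ (Y : 𝔤) (x : B), ψ (opQ.I (π Y) x) = op.I Y (ψ x))
    (hψgr : ∀ m : ℤ, opQ.grading m = Submodule.comap ψ.toLinearMap (op.grading m))
    (wdG : WeilData ι b W) (wdQ : WeilData κ bq WQ) (n : ℤ)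
    (P : ℤ → Submodule ℝ (Tw wdG.sup op.toSuper)) (P' : ℤ → Submodule ℝ (Tw wdQ.sup opQ.toSuper))
    (hP : ∀ m z, z ∈ P m ↔ (∀ X, LL wdG.sup op.toSuper X z = 0) ∧
      (∀ X, IL wdG.sup op.toSuper X z = 0) ∧ dd wdG.sup op.toSuper z = (m : ℝ) • z)
    (hP' : ∀ m z, z ∈ P' m ↔ (∀ X, LL wdQ.sup opQ.toSuper X z = 0) ∧
      (∀ X, IL wdQ.sup opQ.toSuper X z = 0) ∧ dd wdQ.sup opQ.toSuper z = (m : ℝ) • z) :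
    Nonempty (gradedCoh (DD wdG.sup op.toSuper) P n ≃ₗ[ℝ]
      gradedCoh (DD wdQ.sup opQ.toSuper) P' n) := by
  obtain ⟨sl, hsl⟩ := LinearMap.exists_rightInverse_of_surjective (π : 𝔤 →ₗ[ℝ] 𝔮)
    (LinearMap.range_eq_top.2 hπsurj)
  obtain ⟨pm, h1, h2⟩ := exists_pm wdG wdQ (π : 𝔤 →ₗ[ℝ] 𝔮)
  obtain ⟨rm, h3, h4⟩ := exists_pm wdQ wdG sl
  have hrm : ∀ x, rm (pm x) = x := pm_retract wdG wdQ (π : 𝔤 →ₗ[ℝ] 𝔮) sl hsl pm h1 h2 rm h3 h4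
  let c := mkCore wdG op 𝔫 hn π hπsurj hπker θN hmem hconn hequiv wdQ pm h1 h2
  obtain ⟨K, hKI, hKL, hKdeg, hKF, hKT⟩ := c.exists_Tk b bq hπsurj hπker
  let s := sop wdG.sup op.toSuper
  let φ := twCmp wdG wdQ op opQ pm ψ
  have hφtm : ∀ v x, φ (tm wdQ.sup opQ.toSuper v x) = tm wdG.sup op.toSuper (pm v) (ψ x) :=
    fun v x => rfl
  have hφinj : Function.Injective φ :=
    map_inj_of_left pm.toLinearMap rm.toLinearMap hrm ψ.toLinearMap hψinj
  have hψdg : ∀ x, op.dg (ψ x) = ψ (opQ.dg x) := by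
    intro x
    refine opQ.hind (fun x => op.dg (ψ x) = ψ (opQ.dg x)) ?_ ?_ x
    · intro m a ha
      have ha2 : ψ a ∈ op.grading m := by rw [hψgr] at ha; exact ha
      rw [opQ.dg_of ha, op.dg_of ha2, map_smul]
    · intro x y hx hy; simp only [map_add, hx, hy]
  have hφD : ∀ y, DD wdG.sup op.toSuper (φ y) = φ (DD wdQ.sup opQ.toSuper y) := by
    intro y
    refine Tw.ind wdQ.sup opQ.toSuper
      (fun y => DD wdG.sup op.toSuper (φ y) = φ (DD wdQ.sup opQ.toSuper y)) ?_ ?_ ?_ y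
    · simp only [map_zero]
    · intro v x
      rw [hφtm, DD_tm, DD_tm, map_add, hφtm, hφtm, pm_D wdG wdQ π pm h1 h2,
        pm_ε wdG wdQ π pm h1 h2]
      exact congrArg (fun t => tm wdG.sup op.toSuper (wdG.sup.D (pm v)) (ψ x) +
        tm wdG.sup op.toSuper (wdG.sup.ε (pm v)) t) (hψd x).symm
    · intro x y hx hy; simp only [map_add, hx, hy]
  have hφI : ∀ X y, IL wdG.sup op.toSuper X (φ y) = φ (IL wdQ.sup opQ.toSuper (π X) y) := by
    intro X y
    refine Tw.ind wdQ.sup opQ.toSuper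
      (fun y => IL wdG.sup op.toSuper X (φ y) = φ (IL wdQ.sup opQ.toSuper (π X) y)) ?_ ?_ ?_ y
    · simp only [map_zero]
    · intro v x
      rw [hφtm, IL_tm, IL_tm, map_add, hφtm, hφtm, pm_I wdG wdQ π pm h1 h2,
        pm_ε wdG wdQ π pm h1 h2]
      exact congrArg (fun t => tm wdG.sup op.toSuper (wdG.sup.I X (pm v)) (ψ x) +
        tm wdG.sup op.toSuper (wdG.sup.ε (pm v)) t) (hψI X x).symm
    · intro x y hx hy; simp only [map_add, hx, hy]
  have hφL : ∀ X y, LL wdG.sup op.toSuper X (φ y) = φ (LL wdQ.sup opQ.toSuper (π X) y) := by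
    intro X y
    refine Tw.ind wdQ.sup opQ.toSuper
      (fun y => LL wdG.sup op.toSuper X (φ y) = φ (LL wdQ.sup opQ.toSuper (π X) y)) ?_ ?_ ?_ y
    · simp only [map_zero]
    · intro v x
      rw [hφtm, LL_tm, LL_tm, map_add, hφtm, hφtm, pm_L wdG wdQ π pm h1 h2]
      exact congrArg (fun t => tm wdG.sup op.toSuper (wdG.sup.L X (pm v)) (ψ x) +
        tm wdG.sup op.toSuper (pm v) t) (hψL X x).symm
    · intro x y hx hy; simp only [map_add, hx, hy]
  have hφd : ∀ y, dd wdG.sup op.toSuper (φ y) = φ (dd wdQ.sup opQ.toSuper y) := by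
    intro y
    refine Tw.ind wdQ.sup opQ.toSuper
      (fun y => dd wdG.sup op.toSuper (φ y) = φ (dd wdQ.sup opQ.toSuper y)) ?_ ?_ ?_ y
    · simp only [map_zero]
    · intro v x
      rw [hφtm, dd_tm, dd_tm, map_add, hφtm, hφtm, pm_deg wdG wdQ π pm h1 h2]
      exact congrArg (fun t => tm wdG.sup op.toSuper (wdG.sup.deg (pm v)) (ψ x) +
        tm wdG.sup op.toSuper (pm v) t) (hψdg x)
    · intro x y hx hy; simp only [map_add, hx, hy]
  have hφF : ∀ y, φ y ∈ FF wdG op.toSuper pm := by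
    intro y
    refine Tw.ind wdQ.sup opQ.toSuper (fun y => φ y ∈ FF wdG op.toSuper pm) ?_ ?_ ?_ y
    · rw [map_zero]; exact Submodule.zero_mem _
    · intro v x; exact FF_tm _ _ _ _ _
    · intro x y hx hy; rw [map_add]; exact Submodule.add_mem _ hx hy
  have hPP : ∀ m y, y ∈ P' m ↔ φ y ∈ P m := by
    intro m y
    rw [hP, hP']
    simp only [hφI, hφL, hφd, ← map_smul]
    have h0 : ∀ z, φ z = 0 ↔ z = 0 := fun z => by rw [← map_zero φ]; exact hφinj.eq_iff
    simp only [h0, hφinj.eq_iff]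
    refine and_congr ?_ (and_congr ?_ Iff.rfl)
    · exact ⟨fun h X => h _, fun h Z => by obtain ⟨X, rfl⟩ := hπsurj Z; exact h X⟩
    · exact ⟨fun h X => h _, fun h Z => by obtain ⟨X, rfl⟩ := hπsurj Z; exact h X⟩
  have hDP : ∀ m x, x ∈ P m → s.D x ∈ P (m + 1) := by
    intro m x hx
    rw [hP] at hx ⊢
    obtain ⟨hl, hi, hd⟩ := hx
    refine ⟨fun X => ?_, fun X => ?_, ?_⟩
    · have := s.L_D X x
      rw [show s.L X x = 0 from hl X, map_zero] at this
      exact this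
    · have := s.cartan X x
      rw [show s.L X x = 0 from hl X, show s.I X x = 0 from hi X, map_zero, add_zero] at this
      exact this
    · have := s.deg_D x
      rw [show s.deg x = (m : ℝ) • x from hd, map_smul] at this
      refine this.trans ?_
      push_cast
      module
  have hKP : ∀ m x, x ∈ P m → K x ∈ P (m - 1) := by
    intro m x hx
    rw [hP] at hx ⊢
    obtain ⟨hl, hi, hd⟩ := hx
    refine ⟨fun X => ?_, fun X => ?_, ?_⟩
    · have := hKL X x
      rw [show s.L X x = 0 from hl X, map_zero] at this
      exact this
    · have := hKI X x
      rw [show s.I X x = 0 from hi X, map_zero, neg_zero] at this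
      exact this
    · have := hKdeg x
      rw [show s.deg x = (m : ℝ) • x from hd, map_smul] at this
      refine this.trans ?_
      push_cast
      module
  have hMP : ∀ m x, x ∈ P m → (s.D ∘ₗ K + K ∘ₗ s.D) x ∈ P m := by
    intro m x hx
    refine (P m).add_mem ?_ ?_
    · have := hDP _ _ (hKP _ _ hx); rwa [sub_add_cancel] at this
    · have := hKP _ _ (hDP _ _ hx); rwa [add_sub_cancel_right] at this
  have hTP : ∀ k m x, x ∈ P m → Tk (s.D ∘ₗ K + K ∘ₗ s.D) k x ∈ P m := by
    intro k
    induction k with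
    | zero => intro m x hx; exact hx
    | succ k ih =>
      intro m x hx
      exact ih _ _ ((P m).add_mem hx ((P m).smul_mem _ (hMP _ _ hx)))
  refine coh_equiv (DD wdG.sup op.toSuper) (DD wdQ.sup opQ.toSuper) P P' φ K s.D_D hφinj hφD hPP
    hDP hKP (fun y => hKF _ (hφF y)) ?_ n
  intro m x hx
  obtain ⟨k, hk⟩ := hKT x
  have hx2 := (hP _ _).1 (hTP k m x hx)
  obtain ⟨u, hu⟩ := FF_range wdG wdQ op opQ 𝔫 π hπker pm h1 h2 rm hrm ψ hψrange _ hk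
    (fun X _ => hx2.2.1 X) (fun X _ => hx2.1 X)
  exact ⟨k, u, hu⟩

end

end

/-- Let `E` be a smooth manifold with a smooth action of the compact
connected Lie group `G`, let `N ⊴ G` be a closed normal subgroup acting freely on `E`,
and `Q = G/N`.  Then `WH^*_G(E) ≅ WH^*_Q(E/N)`.

Mathlib has no exterior calculus on manifolds, so the de Rham algebras are encoded by
the structures they carry, which is all that the statement and its proof use: `A` stands
for the `G`-operation `Ω^*(E)`; since `N` acts freely, `E → E/N` is a principal
`N`-bundle and carries a `G`-invariant principal `N`-connection `θ̃` (hypotheses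
`hmem, hconn, hequiv`); and `B` stands for `Ω^*(E/N) ≅ Ω^*(E)_{N,bas}` with its
residual `Q = G/N`-operation structure, the isomorphism being the embedding `ψ` onto
the `N`-basic subalgebra.  Infinitesimally (for `G` compact connected) `𝔫 ⊆ 𝔤` is an
ideal and `𝔮 = 𝔤/𝔫` is presented by a surjection `π` with kernel `𝔫`.  The conclusion
is that the Weil-model equivariant cohomologies `WH^n_G(Ω^*(E))` — the basic cohomology
of `W_G ⊗ Ω^*(E)` — and `WH^n_Q(Ω^*(E/N))` are isomorphic in every degree `n`. -/
theorem equivariant_cohomology_of_free_quotient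
    (b : Module.Basis ι ℝ 𝔤) (op : Operation 𝔤 A)
    (𝔫 : Submodule ℝ 𝔤) (hn : ∀ (Y : 𝔤), ∀ x ∈ 𝔫, ⁅Y, x⁆ ∈ 𝔫)
    (π : 𝔤 →ₗ⁅ℝ⁆ 𝔮) (hπsurj : Function.Surjective π)
    (hπker : ∀ X : 𝔤, π X = 0 ↔ X ∈ 𝔫)
    (bq : Module.Basis κ ℝ 𝔮)
    (θN : Module.Dual ℝ ↥𝔫 →ₗ[ℝ] A)
    (hmem : ∀ α, θN α ∈ op.grading 1)
    (hconn : ∀ (X : ↥𝔫) (α : Module.Dual ℝ ↥𝔫),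
      op.I (X : 𝔤) (θN α) = α X • (1 : A))
    (hequiv : ∀ (Y : 𝔤) (α : Module.Dual ℝ ↥𝔫),
      op.L Y (θN α) = -θN (α ∘ₗ adRes 𝔫 hn Y))
    (opQ : Operation 𝔮 B) (ψ : B →ₐ[ℝ] A)
    (hψinj : Function.Injective ψ)
    (hψrange : LinearMap.range ψ.toLinearMap =
      (⨅ X : ↥𝔫, LinearMap.ker (op.L (X : 𝔤))) ⊓
        (⨅ X : ↥𝔫, LinearMap.ker (op.I (X : 𝔤))))
    (hψd : ∀ x : B, ψ (opQ.d x) = op.d (ψ x))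
    (hψL : ∀ (Y : 𝔤) (x : B), ψ (opQ.L (π Y) x) = op.L Y (ψ x))
    (hψI : ∀ (Y : 𝔤) (x : B), ψ (opQ.I (π Y) x) = op.I Y (ψ x))
    (hψgr : ∀ m : ℤ, opQ.grading m = Submodule.comap ψ.toLinearMap (op.grading m))
    (wdG : WeilData ι b W) (wdQ : WeilData κ bq WQ)
    (εG : Module.End ℝ W) (hεG : ∀ (n : ℤ), ∀ w ∈ wdG.grading n, εG w = sgn n • w)
    (εQ : Module.End ℝ WQ) (hεQ : ∀ (n : ℤ), ∀ w ∈ wdQ.grading n, εQ w = sgn n • w) :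
    ∀ n : ℤ, Nonempty
      ((gradedCoh (DTot wdG op εG)
          (fun m => ((⨅ X : 𝔤, LinearMap.ker (LTot wdG op X)) ⊓
            (⨅ X : 𝔤, LinearMap.ker (ITot wdG op εG X))) ⊓ grTensor b wdG op m) n)
        ≃ₗ[ℝ]
       (gradedCoh (DTot wdQ opQ εQ)
          (fun m => ((⨅ X : 𝔮, LinearMap.ker (LTot wdQ opQ X)) ⊓
            (⨅ X : 𝔮, LinearMap.ker (ITot wdQ opQ εQ X))) ⊓ grTensor bq wdQ opQ m) n)) := by
  intro n
  obtain rfl := wdG.eps_unique εG hεG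
  obtain rfl := wdQ.eps_unique εQ hεQ
  refine main_thm b op 𝔫 hn π hπsurj hπker bq θN hmem hconn hequiv opQ ψ hψinj hψrange hψd hψL hψI
    hψgr wdG wdQ n _ _ ?_ ?_
  · intro m z
    exact bas_iff wdG op m z
  · intro m z
    exact bas_iff wdQ opQ m z

end
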